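/- arXiv:math/0502579 — 4 statements merged into one kernel-verified Lean document; each statement's English description precedes it below -/
import Mathlib

section
/- Let ε = ε(n) → 0⁺ and L = L(n) → ∞ with L·ε² → ∞, and let λ_1, …, λ_L satisfy λ_i = 1 + ε + o(ε) uniformly in 1 ≤ i ≤ L (i.e. max_i |λ_i - 1 - ε|/ε → 0). Let Z_i ~ Po(λ_i) be independent and consider the leftwalk they define. Then Pr[ESC_L] ~ 2ε as n → ∞. -/
open Filter Topology Real Finset

-- Indicator of a proposition, as a real number.
open Classical in
noncomputable def ind (P : Prop) : ℝ := if P then 1 else 0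

/-- Poisson point mass: `Pr[Po(r) = n]`. -/
noncomputable def poissonP (r : ℝ) (n : ℕ) : ℝ := Real.exp (-r) * r ^ n / n.factorial

/-- The escape condition for the leftwalk `Y_0 = 1`, `Y_i = Y_{i-1} + Z_i - 1` up to
time `L`: `Y_t > 0` for `1 ≤ t ≤ L`, i.e. `Z_1 + ⋯ + Z_t ≥ t`.  Here bin `i+1`
contains `z i` balls (0-based indexing). -/
def leftOK (L : ℕ) (z : Fin L → ℕ) : Prop :=
  ∀ t, 1 ≤ t → t ≤ L → t ≤ ∑ i ∈ Finset.univ.filter (fun i : Fin L => (i : ℕ) < t), z i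

/-- The escape condition for the rightwalk `Y_0^R = 0`, `Y_i^R = Y_{i-1}^R + 1 - Z_i^R`
up to time `L`: `Y_t^R > 0` for `1 ≤ t ≤ L`, i.e. `Z_1^R + ⋯ + Z_t^R ≤ t - 1`. -/
def rightOK (L : ℕ) (z : Fin L → ℕ) : Prop :=
  ∀ t, 1 ≤ t → t ≤ L → (∑ i ∈ Finset.univ.filter (fun i : Fin L => (i : ℕ) < t), z i) < t

/-- `Pr[ESC_L]` for the leftwalk with independent steps `Z_i ∼ Po(lam i)`. -/
noncomputable def escLProbV (lam : ℕ → ℝ) (L : ℕ) : ℝ :=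
  ∑' z : Fin L → ℕ, (∏ i : Fin L, poissonP (lam (i : ℕ)) (z i)) * ind (leftOK L z)

/-- `Pr[ESC_L]` for the leftwalk with i.i.d. steps `Z_i ∼ Po(r)`. -/
noncomputable def escLProb (r : ℝ) (L : ℕ) : ℝ := escLProbV (fun _ => r) L

/-- `Pr[ESC]` for the leftwalk with i.i.d. steps `Z_i ∼ Po(r)`: since
`ESC = ⋂_L ESC_L` is a decreasing intersection, `Pr[ESC] = inf_L Pr[ESC_L]`. -/
noncomputable def escProb (r : ℝ) : ℝ := ⨅ L : ℕ, escLProb r L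

/-- `Pr[ESC_L^R]` for the rightwalk with independent steps `Z_i^R ∼ Po(lam i)`. -/
noncomputable def escRLProbV (lam : ℕ → ℝ) (L : ℕ) : ℝ :=
  ∑' z : Fin L → ℕ, (∏ i : Fin L, poissonP (lam (i : ℕ)) (z i)) * ind (rightOK L z)

/-- `Pr[ESC_L^R]` for the rightwalk with i.i.d. steps `Z_i^R ∼ Po(r)`. -/
noncomputable def escRLProb (r : ℝ) (L : ℕ) : ℝ := escRLProbV (fun _ => r) L

/-- `Pr[ESC^R]` for the rightwalk with i.i.d. steps `Z_i^R ∼ Po(r)`. -/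
noncomputable def escRProb (r : ℝ) : ℝ := ⨅ L : ℕ, escRLProb r L

/-! Condition on the first step. If the generating functions of all steps satisfy `G s ≤ s`, then
`s ^ Y` is a supermartingale and the walk survives from height `y` with probability at least
`1 - s ^ y`. For `Po(λ)`, the expansion `-log (1 - a) = a + a² / 2 + O(a³)` gives
`G (1 - a) ≤ 1 - a` once `λ ≥ 1 + a / 2 + O(a²)`, and `a ≈ 2 ε` yields the lower bound.

For the upper bound take `η` slightly larger than `ε`, and `t = 1 - η`. Now `t² ≤ G (t²)`, while
`G t ≤ ρ t` with `ρ = exp (-η² / 8)`; hence a bound `1 - t^(2y) + C (t^y - t^(2y))` on the survival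
probability keeps its shape when `j` steps are put in front, with `C` multiplied by `ρ ^ j`.
Starting this with `C` independent of `η` is the crux, since `L ε²` may diverge arbitrarily slowly.
The last `k ≈ 2 / η²` steps achieve it: `t^(3Y)` grows on average by the factor `1 + η² / 2` per
step, so optional stopping when `t^(3Y) ≤ 1 / 2` bounds the probability of surviving these steps by
`min 1 (2 (1 - t^(3y)))`, which allows `C = 4`. From height `1` the total is at most
`2 η + 4 ρ^(L - k) η`. -/

lemma hasSum_prod_of_nonneg {α β : Type*} {f : α × β → ℝ} {g : α → ℝ} {S : ℝ} (hf : 0 ≤ f)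
    (hfg : ∀ a, HasSum (fun b => f (a, b)) (g a)) (hg : HasSum g S) : HasSum f S := by
  have hsum : Summable f := (summable_prod_of_nonneg hf).2
    ⟨fun a => (hfg a).summable, by simpa only [(hfg _).tsum_eq] using hg.summable⟩
  exact (hsum.hasSum.prod_fiberwise hfg).unique hg ▸ hsum.hasSum

lemma min_one_two_mul_one_sub_cube_le {x : ℝ} (hx0 : 0 ≤ x) (hx1 : x ≤ 1) :
    min 1 (2 * (1 - x ^ 3)) ≤ 1 - x ^ 2 + 4 * (x - x ^ 2) := by
  rcases le_total x (1 / 2) with hx | hx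
  · exact (min_le_left _ _).trans (by nlinarith)
  · refine (min_le_right _ _).trans ?_
    have : 0 ≤ (1 - x) * ((1 - x) * (2 * x - 1)) :=
      mul_nonneg (by linarith) (mul_nonneg (by linarith) (by linarith))
    linarith

lemma one_sub_le_exp_neg_quadratic {a : ℝ} (ha0 : 0 ≤ a) (ha1 : a < 1) :
    1 - a ≤ Real.exp (-(a + a ^ 2 / 2)) := by
  have hlog := sum_le_hasSum (Finset.range 2) (fun n _ => by positivity)
    (Real.hasSum_pow_div_log_of_abs_lt_one (abs_lt.2 ⟨by linarith, ha1⟩))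
  rw [← Real.log_le_iff_le_exp (by linarith)]
  norm_num [Finset.sum_range_succ] at hlog
  linarith

lemma exp_neg_cubic_le_one_sub {a : ℝ} (ha0 : 0 ≤ a) (ha1 : a ≤ 1 / 2) :
    Real.exp (-(a + a ^ 2 / 2 + 2 * a ^ 3)) ≤ 1 - a := by
  have hlog := Real.abs_log_sub_add_sum_range_le (abs_lt.2 ⟨by linarith, by linarith⟩ : |a| < 1) 2
  have hrem : |a| ^ 3 / (1 - |a|) ≤ 2 * a ^ 3 := by
    rw [abs_of_nonneg ha0, div_le_iff₀ (by linarith)]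
    nlinarith [pow_nonneg ha0 3]
  rw [← Real.le_log_iff_exp_le (by linarith)]
  norm_num [Finset.sum_range_succ] at hlog hrem
  linarith [(abs_le.1 hlog).1]

/-- A probability mass function on `ℕ`, real-valued to match `poissonP`: the law of a step `Z_i`. -/
structure IsStepLaw (p : ℕ → ℝ) : Prop where
  nonneg : ∀ a, 0 ≤ p a
  hasSum_one : HasSum p 1

/-- The probability generating function of a step law. -/
noncomputable def pgf (p : ℕ → ℝ) (s : ℝ) : ℝ := ∑' a, p a * s ^ a

/-- The probability that the walk `Y_i = Y_{i-1} + Z_i - 1` started at height `y` stays positive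
throughout, where the laws of the independent steps `Z_1, Z_2, …` are listed in order. -/
noncomputable def survivalProb : List (ℕ → ℝ) → ℕ → ℝ
  | _, 0 => 0
  | [], _ + 1 => 1
  | p :: ps, m + 1 => ∑' a, p a * survivalProb ps (m + a)

/-- The pathwise form of survival from height `y`, generalizing `leftOK`. Time `0` is included,
so that no path survives from height `0`. -/
def StaysPositive (y : ℕ) {L : ℕ} (z : Fin L → ℕ) : Prop :=
  ∀ t ≤ L, t < y + ∑ i ∈ univ.filter (fun i : Fin L => (i : ℕ) < t), z i

section Walk

variable {p : ℕ → ℝ} {ps qs : List (ℕ → ℝ)} {f : ℕ → ℝ} {m : ℕ} {s S : ℝ}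

lemma IsStepLaw.hasSum_mul_pow_add (hp : IsStepLaw p) (hs0 : 0 ≤ s) (hs1 : s ≤ 1) (m : ℕ) :
    HasSum (fun a => p a * s ^ (m + a)) (s ^ m * pgf p s) := by
  have hsum : Summable fun a => p a * s ^ a :=
    .of_nonneg_of_le (fun a => mul_nonneg (hp.nonneg a) (pow_nonneg hs0 a))
      (fun a => mul_le_of_le_one_right (hp.nonneg a) (pow_le_one₀ hs0 hs1))
      hp.hasSum_one.summable
  refine (hsum.hasSum.mul_left (s ^ m)).congr_fun fun a => ?_
  ring

@[simp]
lemma survivalProb_zero (ps : List (ℕ → ℝ)) : survivalProb ps 0 = 0 := by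
  cases ps <;> rfl

@[simp]
lemma survivalProb_nil_succ (m : ℕ) : survivalProb [] (m + 1) = 1 := rfl

lemma survivalProb_cons_succ (p : ℕ → ℝ) (ps : List (ℕ → ℝ)) (m : ℕ) :
    survivalProb (p :: ps) (m + 1) = ∑' a, p a * survivalProb ps (m + a) := rfl

lemma survivalProb_nonneg (hps : ∀ p ∈ ps, IsStepLaw p) (y : ℕ) : 0 ≤ survivalProb ps y := by
  induction ps generalizing y with
  | nil => cases y <;> simp
  | cons p ps ih =>
    rw [List.forall_mem_cons] at hps
    cases y with
    | zero => simp
    | succ m => exact tsum_nonneg fun a => mul_nonneg (hps.1.nonneg a) (ih hps.2 _)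

lemma survivalProb_le_one (hps : ∀ p ∈ ps, IsStepLaw p) (y : ℕ) : survivalProb ps y ≤ 1 := by
  induction ps generalizing y with
  | nil => cases y <;> simp
  | cons p ps ih =>
    rw [List.forall_mem_cons] at hps
    cases y with
    | zero => simp
    | succ m =>
      rw [survivalProb_cons_succ, ← hps.1.hasSum_one.tsum_eq]
      have hle a : p a * survivalProb ps (m + a) ≤ p a :=
        mul_le_of_le_one_right (hps.1.nonneg a) (ih hps.2 _)
      have hnonneg a : 0 ≤ p a * survivalProb ps (m + a) :=
        mul_nonneg (hps.1.nonneg a) (survivalProb_nonneg hps.2 _)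
      exact (Summable.of_nonneg_of_le hnonneg hle hps.1.hasSum_one.summable).tsum_le_tsum hle
        hps.1.hasSum_one.summable

lemma hasSum_survivalProb_cons (hp : IsStepLaw p) (hps : ∀ p ∈ ps, IsStepLaw p) (m : ℕ) :
    HasSum (fun a => p a * survivalProb ps (m + a)) (survivalProb (p :: ps) (m + 1)) :=
  (Summable.of_nonneg_of_le (fun a => mul_nonneg (hp.nonneg a) (survivalProb_nonneg hps _))
    (fun a => mul_le_of_le_one_right (hp.nonneg a) (survivalProb_le_one hps _))
    hp.hasSum_one.summable).hasSum

lemma survivalProb_cons_le (hp : IsStepLaw p) (hps : ∀ p ∈ ps, IsStepLaw p)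
    (hf : ∀ y, survivalProb ps y ≤ f y) (hS : HasSum (fun a => p a * f (m + a)) S) :
    survivalProb (p :: ps) (m + 1) ≤ S :=
  hasSum_le (fun a => mul_le_mul_of_nonneg_left (hf _) (hp.nonneg a))
    (hasSum_survivalProb_cons hp hps m) hS

lemma le_survivalProb_cons (hp : IsStepLaw p) (hps : ∀ p ∈ ps, IsStepLaw p)
    (hf : ∀ y, f y ≤ survivalProb ps y) (hS : HasSum (fun a => p a * f (m + a)) S) :
    S ≤ survivalProb (p :: ps) (m + 1) :=
  hasSum_le (fun a => mul_le_mul_of_nonneg_left (hf _) (hp.nonneg a)) hS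
    (hasSum_survivalProb_cons hp hps m)

lemma one_sub_pow_le_survivalProb (hs0 : 0 ≤ s) (hs1 : s ≤ 1) (hps : ∀ p ∈ ps, IsStepLaw p)
    (hs : ∀ p ∈ ps, pgf p s ≤ s) (y : ℕ) : 1 - s ^ y ≤ survivalProb ps y := by
  induction ps generalizing y with
  | nil => cases y <;> simp [pow_nonneg hs0]
  | cons p ps ih =>
    rw [List.forall_mem_cons] at hps hs
    cases y with
    | zero => simp
    | succ m =>
      have hsum : HasSum (fun a => p a * (1 - s ^ (m + a))) (1 - s ^ m * pgf p s) := by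
        simpa only [mul_sub, mul_one] using
          hps.1.hasSum_one.sub (hps.1.hasSum_mul_pow_add hs0 hs1 m)
      calc 1 - s ^ (m + 1) ≤ 1 - s ^ m * pgf p s := by
            rw [pow_succ]; gcongr; exact hs.1
        _ ≤ survivalProb (p :: ps) (m + 1) :=
            le_survivalProb_cons hps.1 hps.2 (ih hps.2 hs.2) hsum

/- As long as `r ^ Y > 1 / 2`, the expectation of `r ^ Y` grows by at least `d / 2` in each step,
which pays for the decrease of `1 - n * d`; once `r ^ Y ≤ 1 / 2` the bound is trivial. -/
lemma survivalProb_le_two_mul_add_max {r d : ℝ} (hr0 : 0 ≤ r) (hr1 : r ≤ 1) (hd : 0 ≤ d)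
    (hps : ∀ p ∈ ps, IsStepLaw p) (hr : ∀ p ∈ ps, (1 + d) * r ≤ pgf p r) (y : ℕ) :
    survivalProb ps y ≤ 2 * (1 - r ^ y) + max 0 (1 - ps.length * d) := by
  induction ps generalizing y with
  | nil =>
    have := pow_le_one₀ hr0 hr1 (n := y)
    cases y <;> simp_all
  | cons p ps ih =>
    cases y with
    | zero => simp
    | succ m =>
      set M := max 0 (1 - ps.length * d)
      set M' := max 0 (1 - (p :: ps).length * d) with hM'
      have hM'0 : 0 ≤ M' := le_max_left _ _
      rcases le_or_gt (r ^ (m + 1)) (1 / 2) with hsmall | hlarge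
      · linarith [survivalProb_le_one hps (m + 1)]
      rw [List.forall_mem_cons] at hps hr
      have hsum : HasSum (fun a => p a * (2 * (1 - r ^ (m + a)) + M))
          (2 * (1 - r ^ m * pgf p r) + M) := by
        rw [← one_mul M]
        refine (((hps.1.hasSum_one.sub (hps.1.hasSum_mul_pow_add hr0 hr1 m)).mul_left 2).add
          (hps.1.hasSum_one.mul_right M)).congr_fun fun a => ?_
        ring
      have hM : M ≤ M' + d := by
        refine max_le (by positivity) ?_
        have := le_max_right 0 (1 - (p :: ps).length * d)
        rw [← hM', List.length_cons] at this
        push_cast at this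
        linarith
      have hgrowth : r ^ (m + 1) + d / 2 ≤ r ^ m * pgf p r := calc
        r ^ (m + 1) + d / 2 ≤ r ^ (m + 1) + d * r ^ (m + 1) := by nlinarith
        _ = r ^ m * ((1 + d) * r) := by ring
        _ ≤ r ^ m * pgf p r := by gcongr; exact hr.1
      calc survivalProb (p :: ps) (m + 1) ≤ 2 * (1 - r ^ m * pgf p r) + M :=
            survivalProb_cons_le hps.1 hps.2 (ih hps.2 hr.2) hsum
        _ ≤ 2 * (1 - r ^ (m + 1)) + M' := by linarith

lemma survivalProb_append_le {t ρ C : ℝ} (hs0 : 0 ≤ s) (hs1 : s ≤ 1) (ht0 : 0 ≤ t) (ht1 : t ≤ 1)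
    (hρ0 : 0 ≤ ρ) (hρ1 : ρ ≤ 1) (hC : 0 ≤ C) (hps : ∀ p ∈ ps, IsStepLaw p)
    (hqs : ∀ p ∈ qs, IsStepLaw p) (hs : ∀ p ∈ ps, s ≤ pgf p s) (ht : ∀ p ∈ ps, pgf p t ≤ ρ * t)
    (hinit : ∀ y, survivalProb qs y ≤ 1 - s ^ y + C * (t ^ y - s ^ y)) (y : ℕ) :
    survivalProb (ps ++ qs) y ≤ 1 - s ^ y + C * ρ ^ ps.length * (t ^ y - s ^ y) := by
  induction ps generalizing y with
  | nil => simpa using hinit y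
  | cons p ps ih =>
    rw [List.forall_mem_cons] at hps hs ht
    cases y with
    | zero => simp
    | succ m =>
      set D := C * ρ ^ ps.length
      have hD : 0 ≤ D := by positivity
      have hsum : HasSum (fun a => p a * (1 - s ^ (m + a) + D * (t ^ (m + a) - s ^ (m + a))))
          (1 - s ^ m * pgf p s + D * (t ^ m * pgf p t - s ^ m * pgf p s)) := by
        have hsum_s := hps.1.hasSum_mul_pow_add hs0 hs1 m
        have hsum_t := hps.1.hasSum_mul_pow_add ht0 ht1 m
        refine ((hps.1.hasSum_one.sub hsum_s).add
          ((hsum_t.sub hsum_s).mul_left D)).congr_fun fun a => ?_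
        ring
      have hs_step : s ^ (m + 1) ≤ s ^ m * pgf p s := by
        rw [pow_succ]; gcongr; exact hs.1
      have ht_step : t ^ m * pgf p t ≤ ρ * t ^ (m + 1) := calc
        t ^ m * pgf p t ≤ t ^ m * (ρ * t) := by gcongr; exact ht.1
        _ = ρ * t ^ (m + 1) := by ring
      have hρs : ρ * s ^ (m + 1) ≤ s ^ (m + 1) := mul_le_of_le_one_left (by positivity) hρ1
      have htail : ∀ p ∈ ps ++ qs, IsStepLaw p := List.forall_mem_append.2 ⟨hps.2, hqs⟩
      calc survivalProb (p :: (ps ++ qs)) (m + 1)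
          ≤ 1 - s ^ m * pgf p s + D * (t ^ m * pgf p t - s ^ m * pgf p s) :=
            survivalProb_cons_le hps.1 htail (ih hps.2 hs.2 ht.2) hsum
        _ ≤ 1 - s ^ (m + 1) + D * (ρ * t ^ (m + 1) - ρ * s ^ (m + 1)) := by
            linarith [mul_le_mul_of_nonneg_left ht_step hD, mul_le_mul_of_nonneg_left hs_step hD,
              mul_le_mul_of_nonneg_left hρs hD]
        _ = 1 - s ^ (m + 1) + C * ρ ^ (p :: ps).length * (t ^ (m + 1) - s ^ (m + 1)) := by
            rw [List.length_cons]; ring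

lemma survivalProb_le_of_mul_cube_le_pgf {t d : ℝ} (ht0 : 0 ≤ t) (ht1 : t ≤ 1) (hd : 0 ≤ d)
    (hlen : 1 ≤ ps.length * d) (hps : ∀ p ∈ ps, IsStepLaw p)
    (ht3 : ∀ p ∈ ps, (1 + d) * t ^ 3 ≤ pgf p (t ^ 3)) (y : ℕ) :
    survivalProb ps y ≤ 1 - (t ^ 2) ^ y + 4 * (t ^ y - (t ^ 2) ^ y) := by
  have hbound := survivalProb_le_two_mul_add_max (pow_nonneg ht0 3) (pow_le_one₀ ht0 ht1) hd
    hps ht3 y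
  rw [max_eq_left (by linarith), add_zero, pow_right_comm] at hbound
  rw [pow_right_comm]
  exact (le_min (survivalProb_le_one hps y) hbound).trans
    (min_one_two_mul_one_sub_cube_le (pow_nonneg ht0 y) (pow_le_one₀ ht0 ht1))

lemma survivalProb_le_of_pgf_le {t d ρ : ℝ} {k : ℕ} (ht0 : 0 ≤ t) (ht1 : t ≤ 1) (hd : 0 ≤ d)
    (hρ0 : 0 ≤ ρ) (hρ1 : ρ ≤ 1) (hk : k ≤ ps.length) (hkd : 1 ≤ k * d)
    (hps : ∀ p ∈ ps, IsStepLaw p) (ht : ∀ p ∈ ps, pgf p t ≤ ρ * t)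
    (ht2 : ∀ p ∈ ps, t ^ 2 ≤ pgf p (t ^ 2))
    (ht3 : ∀ p ∈ ps, (1 + d) * t ^ 3 ≤ pgf p (t ^ 3)) (y : ℕ) :
    survivalProb ps y ≤
      1 - (t ^ 2) ^ y + 4 * ρ ^ (ps.length - k) * (t ^ y - (t ^ 2) ^ y) := by
  set n := ps.length - k
  have hdrop : (ps.drop n).length = k := by rw [List.length_drop]; lia
  have htake : (ps.take n).length = n := by rw [List.length_take]; lia
  have hlast := survivalProb_le_of_mul_cube_le_pgf ht0 ht1 hd (by rwa [hdrop])
    (fun p hp => hps p (List.mem_of_mem_drop hp)) (fun p hp => ht3 p (List.mem_of_mem_drop hp))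
  have hall := survivalProb_append_le (ps := ps.take n) (pow_nonneg ht0 2)
    (pow_le_one₀ ht0 ht1) ht0 ht1 hρ0 hρ1 zero_le_four
    (fun p hp => hps p (List.mem_of_mem_take hp))
    (fun p hp => hps p (List.mem_of_mem_drop hp)) (fun p hp => ht2 p (List.mem_of_mem_take hp))
    (fun p hp => ht p (List.mem_of_mem_take hp)) hlast y
  rwa [List.take_append_drop, htake] at hall

end Walk

section Paths

lemma ind_nonneg (P : Prop) : 0 ≤ ind P := by
  unfold ind; split_ifs <;> norm_num

lemma not_staysPositive_zero {L : ℕ} (z : Fin L → ℕ) : ¬ StaysPositive 0 z :=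
  fun h => by simpa using h 0 (Nat.zero_le L)

lemma staysPositive_one_iff_leftOK {L : ℕ} (z : Fin L → ℕ) : StaysPositive 1 z ↔ leftOK L z := by
  refine ⟨fun h t _ htL => by have := h t htL; lia, fun h t htL => ?_⟩
  rcases Nat.eq_zero_or_pos t with rfl | ht
  · lia
  · have := h t ht htL; lia

lemma staysPositive_cons {L : ℕ} (m a : ℕ) (z : Fin L → ℕ) :
    StaysPositive (m + 1) (Fin.cons a z : Fin (L + 1) → ℕ) ↔ StaysPositive (m + a) z := by
  have hsum (t : ℕ) : ∑ i ∈ univ.filter (fun i : Fin (L + 1) => (i : ℕ) < t + 1),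
      (Fin.cons a z : Fin (L + 1) → ℕ) i =
        a + ∑ i ∈ univ.filter (fun i : Fin L => (i : ℕ) < t), z i := by
    simp [Finset.sum_filter, Fin.sum_univ_succ]
  constructor
  · intro h t ht
    have := h (t + 1) (by lia)
    rw [hsum] at this; lia
  · rintro h (_ | t) ht
    · lia
    · have := h t (by lia)
      rw [hsum]; lia

lemma hasSum_prod_mul_ind_staysPositive {L : ℕ} (p : Fin L → ℕ → ℝ)
    (hp : ∀ i, IsStepLaw (p i)) (y : ℕ) :
    HasSum (fun z : Fin L → ℕ => (∏ i, p i (z i)) * ind (StaysPositive y z))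
      (survivalProb (List.ofFn p) y) := by
  induction L generalizing y with
  | zero =>
    cases y with
    | zero => simp [ind, not_staysPositive_zero]
    | succ m =>
      have hind (z : Fin 0 → ℕ) : ind (StaysPositive (m + 1) z) = 1 := by
        simp [ind, StaysPositive]
      simp [hind]
  | succ L ih =>
    cases y with
    | zero => simp [ind, not_staysPositive_zero]
    | succ m =>
      have htail : ∀ q ∈ List.ofFn fun i : Fin L => p i.succ, IsStepLaw q := by
        simpa [List.forall_mem_ofFn_iff] using fun i : Fin L => hp i.succ
      rw [List.ofFn_succ, ← (Fin.consEquiv fun _ : Fin (L + 1) => ℕ).hasSum_iff]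
      refine hasSum_prod_of_nonneg
        (fun _ => mul_nonneg (Finset.prod_nonneg fun i _ => (hp i).nonneg _) (ind_nonneg _))
        (fun a => ?_) (hasSum_survivalProb_cons (hp 0) htail m)
      refine ((ih _ (fun i => hp i.succ) (m + a)).mul_left (p 0 a)).congr_fun fun z => ?_
      simp [Fin.consEquiv, Fin.prod_univ_succ, staysPositive_cons, mul_assoc]

end Paths

section Poisson

variable {lam : ℕ → ℝ} {L : ℕ} {l : ℝ}

lemma hasSum_poissonP_mul_pow (l s : ℝ) :
    HasSum (fun a => poissonP l a * s ^ a) (Real.exp (l * (s - 1))) := by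
  have hexp : HasSum (fun a : ℕ => (l * s) ^ a / a.factorial) (Real.exp (l * s)) := by
    rw [Real.exp_eq_exp_ℝ]
    exact NormedSpace.expSeries_div_hasSum_exp (l * s)
  have hfactor : Real.exp (l * (s - 1)) = Real.exp (-l) * Real.exp (l * s) := by
    rw [← Real.exp_add]; ring_nf
  rw [hfactor]
  refine (hexp.mul_left (Real.exp (-l))).congr_fun fun a => ?_
  simp only [poissonP]
  ring

lemma pgf_poissonP (l s : ℝ) : pgf (poissonP l) s = Real.exp (l * (s - 1)) :=
  (hasSum_poissonP_mul_pow l s).tsum_eq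

lemma isStepLaw_poissonP (hl : 0 ≤ l) : IsStepLaw (poissonP l) where
  nonneg a := by unfold poissonP; positivity
  hasSum_one := by simpa using hasSum_poissonP_mul_pow l 1

lemma escLProbV_eq_survivalProb (hlam : ∀ i < L, 0 ≤ lam i) :
    escLProbV lam L = survivalProb (List.ofFn fun i : Fin L => poissonP (lam i)) 1 := by
  rw [← (hasSum_prod_mul_ind_staysPositive _ (fun i => isStepLaw_poissonP (hlam i i.2)) 1).tsum_eq]
  simp only [escLProbV, staysPositive_one_iff_leftOK]

lemma exp_mul_one_sub_le_pgf_poissonP {a d : ℝ} (ha0 : 0 ≤ a) (ha1 : a < 1)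
    (h : d + l * a ≤ a + a ^ 2 / 2) : Real.exp d * (1 - a) ≤ pgf (poissonP l) (1 - a) := by
  calc Real.exp d * (1 - a) ≤ Real.exp d * Real.exp (-(a + a ^ 2 / 2)) := by
        gcongr; exact one_sub_le_exp_neg_quadratic ha0 ha1
    _ ≤ pgf (poissonP l) (1 - a) := by
        rw [pgf_poissonP, ← Real.exp_add]; gcongr; linarith

lemma pgf_poissonP_le_exp_neg_mul_one_sub {a c : ℝ} (ha0 : 0 ≤ a) (ha1 : a ≤ 1 / 2)
    (h : c + a + a ^ 2 / 2 + 2 * a ^ 3 ≤ l * a) :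
    pgf (poissonP l) (1 - a) ≤ Real.exp (-c) * (1 - a) := by
  calc pgf (poissonP l) (1 - a) ≤ Real.exp (-c) * Real.exp (-(a + a ^ 2 / 2 + 2 * a ^ 3)) := by
        rw [pgf_poissonP, ← Real.exp_add]; gcongr; linarith
    _ ≤ Real.exp (-c) * (1 - a) := by
        gcongr; exact exp_neg_cubic_le_one_sub ha0 ha1

lemma le_escLProbV {a : ℝ} (ha0 : 0 ≤ a) (ha1 : a ≤ 1 / 2)
    (hlam : ∀ i < L, 1 + a / 2 + 2 * a ^ 2 ≤ lam i) : a ≤ escLProbV lam L := by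
  have hnonneg (i) (hi : i < L) : 0 ≤ lam i := le_trans (by positivity) (hlam i hi)
  have hpgf (i) (hi : i < L) : pgf (poissonP (lam i)) (1 - a) ≤ 1 - a := by
    have := mul_le_mul_of_nonneg_right (hlam i hi) ha0
    simpa using pgf_poissonP_le_exp_neg_mul_one_sub (c := 0) ha0 ha1 (by linarith)
  rw [escLProbV_eq_survivalProb hnonneg]
  simpa using one_sub_pow_le_survivalProb (by linarith) (by linarith)
    (List.forall_mem_ofFn_iff.2 fun i : Fin L => isStepLaw_poissonP (hnonneg i i.2))
    (List.forall_mem_ofFn_iff.2 fun i : Fin L => hpgf i i.2) 1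

lemma pgf_poissonP_one_sub_le {η : ℝ} (hη0 : 0 ≤ η) (hη1 : η ≤ 1 / 16)
    (hl : 1 + 3 / 4 * η ≤ l) :
    pgf (poissonP l) (1 - η) ≤ Real.exp (-(η ^ 2 / 8)) * (1 - η) :=
  pgf_poissonP_le_exp_neg_mul_one_sub hη0 (by linarith)
    (by nlinarith [mul_le_mul_of_nonneg_right hη1 (sq_nonneg η)])

lemma one_sub_sq_le_pgf_poissonP {η : ℝ} (hη0 : 0 ≤ η) (hη1 : η < 1)
    (hl : l ≤ 1 + η - η ^ 2 / 2) :
    (1 - η) ^ 2 ≤ pgf (poissonP l) ((1 - η) ^ 2) := by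
  have ha0 : 0 ≤ 2 * η - η ^ 2 := by nlinarith
  have := exp_mul_one_sub_le_pgf_poissonP (d := 0) (l := l) ha0 (by nlinarith)
    (by linarith [mul_le_mul_of_nonneg_right hl ha0])
  rw [Real.exp_zero, one_mul] at this
  convert this using 2 <;> ring

lemma mul_one_sub_cube_le_pgf_poissonP {η : ℝ} (hη0 : 0 ≤ η) (hη1 : η ≤ 1 / 16)
    (hl : l ≤ 1 + η) :
    (1 + η ^ 2 / 2) * (1 - η) ^ 3 ≤ pgf (poissonP l) ((1 - η) ^ 3) := by
  obtain ⟨a, ha⟩ : ∃ a, (1 - η) ^ 3 = 1 - a := ⟨1 - (1 - η) ^ 3, by ring⟩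
  have hηa : 5 / 2 * η ≤ a := by nlinarith [pow_nonneg hη0 3]
  have ha1 : a < 1 := by linarith [pow_pos (show 0 < 1 - η by linarith) 3]
  have hexponent : η ^ 2 / 2 + l * a ≤ a + a ^ 2 / 2 := by nlinarith
  rw [ha]
  calc (1 + η ^ 2 / 2) * (1 - a) ≤ Real.exp (η ^ 2 / 2) * (1 - a) := by
        gcongr; linarith [Real.add_one_le_exp (η ^ 2 / 2)]
    _ ≤ pgf (poissonP l) (1 - a) :=
        exp_mul_one_sub_le_pgf_poissonP (by linarith) ha1 hexponent

lemma escLProbV_le {η : ℝ} (hη0 : 0 < η) (hη1 : η ≤ 1 / 16) (hLη : 3 ≤ L * η ^ 2)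
    (hlower : ∀ i < L, 1 + 3 / 4 * η ≤ lam i) (hupper : ∀ i < L, lam i ≤ 1 + η - η ^ 2 / 2) :
    escLProbV lam L ≤ 2 * η * (1 + 2 * Real.exp (-((L * η ^ 2 - 3) / 8))) := by
  have hηsq : 0 < η ^ 2 := by positivity
  have hnonneg (i) (hi : i < L) : 0 ≤ lam i := le_trans (by positivity) (hlower i hi)
  set k := ⌈2 / η ^ 2⌉₊
  have hk_lower : 1 ≤ k * (η ^ 2 / 2) := by
    have := (div_le_iff₀ hηsq).1 (Nat.le_ceil (2 / η ^ 2))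
    linarith
  have hk_upper : k * η ^ 2 ≤ 3 := by
    have := mul_le_mul_of_nonneg_right (Nat.ceil_lt_add_one (by positivity : 0 ≤ 2 / η ^ 2)).le
      hηsq.le
    rw [add_mul, div_mul_cancel₀ _ hηsq.ne'] at this
    nlinarith
  have hkL : k ≤ L := by
    exact_mod_cast le_of_mul_le_mul_right (hk_upper.trans hLη) hηsq
  have hsurv := survivalProb_le_of_pgf_le (ps := List.ofFn fun i : Fin L => poissonP (lam i))
    (t := 1 - η) (d := η ^ 2 / 2) (ρ := Real.exp (-(η ^ 2 / 8)))
    (by linarith) (by linarith) (by positivity) (by positivity)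
    (Real.exp_le_one_iff.2 (by linarith)) (by rwa [List.length_ofFn]) hk_lower
    (List.forall_mem_ofFn_iff.2 fun i => isStepLaw_poissonP (hnonneg i i.2))
    (List.forall_mem_ofFn_iff.2 fun i => pgf_poissonP_one_sub_le hη0.le hη1 (hlower i i.2))
    (List.forall_mem_ofFn_iff.2 fun i =>
      one_sub_sq_le_pgf_poissonP hη0.le (by linarith) (hupper i i.2))
    (List.forall_mem_ofFn_iff.2 fun i =>
      mul_one_sub_cube_le_pgf_poissonP hη0.le hη1 (by linarith [hupper i i.2])) 1
  rw [← escLProbV_eq_survivalProb hnonneg, List.length_ofFn, ← Real.exp_nat_mul, pow_one, pow_one,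
    Nat.cast_sub hkL] at hsurv
  calc escLProbV lam L
      ≤ 1 - (1 - η) ^ 2 +
          4 * Real.exp ((L - k) * -(η ^ 2 / 8)) * ((1 - η) - (1 - η) ^ 2) := hsurv
    _ ≤ 2 * η + 4 * Real.exp (-((L * η ^ 2 - 3) / 8)) * η := by gcongr <;> nlinarith
    _ = 2 * η * (1 + 2 * Real.exp (-((L * η ^ 2 - 3) / 8))) := by ring

lemma abs_escLProbV_div_sub_one_le {ε δ : ℝ} (hε : 0 < ε) (hδ : δ ≤ 1 / 10)
    (hεδ : 16 * ε ≤ δ) (hLε : Real.exp (-((L * ε ^ 2 - 3) / 8)) ≤ δ / 2)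
    (hlam : ∀ i < L, |lam i - (1 + ε)| ≤ δ * ε) :
    |escLProbV lam L / (2 * ε) - 1| ≤ 4 * δ := by
  have hlower (i) (hi : i < L) : 1 + (1 - δ) * ε ≤ lam i := by
    linarith [(abs_le.1 (hlam i hi)).1]
  have hupper (i) (hi : i < L) : lam i ≤ 1 + (1 + δ) * ε := by
    linarith [(abs_le.1 (hlam i hi)).2]
  have hesc_lower : 2 * ((1 - 2 * δ) * ε) ≤ escLProbV lam L := by
    refine le_escLProbV (by nlinarith) (by nlinarith) fun i hi => ?_
    have : ((1 - 2 * δ) * ε) ^ 2 ≤ ε ^ 2 := by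
      gcongr
      · nlinarith
      · nlinarith
    nlinarith [hlower i hi]
  have hL3 : 3 ≤ L * ε ^ 2 := by
    by_contra! h
    linarith [Real.one_le_exp (show 0 ≤ -((L * ε ^ 2 - 3) / 8) by linarith)]
  set η := (1 + 2 * δ) * ε
  have hεη : ε ≤ η := by nlinarith
  have hη0 : 0 < η := hε.trans_le hεη
  have hη_le : η ≤ 2 * ε := by nlinarith
  have hη_sq : η ^ 2 / 2 ≤ δ * ε := by nlinarith
  have hLη : L * ε ^ 2 ≤ L * η ^ 2 := by gcongr
  have hesc_upper : escLProbV lam L ≤ 2 * η * (1 + δ) := calc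
    escLProbV lam L ≤ 2 * η * (1 + 2 * Real.exp (-((L * η ^ 2 - 3) / 8))) :=
      escLProbV_le hη0 (by linarith) (hL3.trans hLη)
        (fun i hi => by nlinarith [hlower i hi]) (fun i hi => by linarith [hupper i hi])
    _ ≤ 2 * η * (1 + 2 * Real.exp (-((L * ε ^ 2 - 3) / 8))) := by gcongr
    _ ≤ 2 * η * (1 + δ) := by gcongr; linarith
  have hδ_sq : δ ^ 2 ≤ δ / 10 := by nlinarith
  rw [abs_le, neg_le_sub_iff_le_add, sub_le_iff_le_add, ← sub_le_iff_le_add,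
    le_div_iff₀ (by positivity), div_le_iff₀ (by positivity)]
  constructor <;> nlinarith

end Poisson

/-- Corollary `t10`: if `ε = ε(n) → 0⁺`, `L = L(n) → ∞` with
`L ε² → ∞`, and `λ_1, …, λ_L` satisfy `λ_i = 1 + ε + o(ε)` uniformly in `i`, then
for the leftwalk with independent steps `Z_i ∼ Po(λ_i)` one has `Pr[ESC_L] ∼ 2ε`. -/
theorem escL_asymp_vary (ε : ℕ → ℝ) (L : ℕ → ℕ) (lam : ℕ → ℕ → ℝ)
    (hεpos : ∀ n, 0 < ε n) (hε0 : Tendsto ε atTop (𝓝 0))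
    (hL : Tendsto L atTop atTop)
    (hLε : Tendsto (fun n : ℕ => (L n : ℝ) * ε n ^ 2) atTop atTop)
    (hlam : ∀ δ : ℝ, 0 < δ → ∀ᶠ n in atTop, ∀ i < L n,
        |lam n i - (1 + ε n)| ≤ δ * ε n) :
    Tendsto (fun n : ℕ => escLProbV (lam n) (L n) / (2 * ε n)) atTop (𝓝 1) := by
  refine Metric.tendsto_nhds.2 fun e he => ?_
  obtain ⟨δ, hδ0, hδ, hδe⟩ : ∃ δ > 0, δ ≤ 1 / 10 ∧ 4 * δ < e :=
    ⟨min (1 / 10) (e / 5), by positivity, min_le_left _ _, by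
      linarith [min_le_right (1 / 10) (e / 5)]⟩
  have hexp : Tendsto (fun n => Real.exp (-((L n * ε n ^ 2 - 3) / 8))) atTop (𝓝 0) :=
    Real.tendsto_exp_neg_atTop_nhds_zero.comp
      ((tendsto_atTop_add_const_right _ (-3) hLε).atTop_div_const (by norm_num))
  filter_upwards [hlam δ hδ0, hε0.eventually_le_const (by positivity : 0 < δ / 16),
    hexp.eventually_le_const (by positivity : 0 < δ / 2)] with n hlam_n hε_n hexp_n
  rw [Real.dist_eq]
  exact (abs_escLProbV_div_sub_one_le (hεpos n) hδ (by linarith) hexp_n hlam_n).trans_lt hδe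
end

section
/- Let ε = ε(n) → 0⁺ and L = L(n) → ∞ with L·ε² → ∞, and let λ_1^R, …, λ_L^R satisfy λ_i^R = 1 - ε + o(ε) uniformly in 1 ≤ i ≤ L (i.e. max_i |λ_i^R - 1 + ε|/ε → 0). Let Z_i^R ~ Po(λ_i^R) be independent and consider the rightwalk they define. Then Pr[ESC_L^R] ~ ε as n → ∞. -/
/-!
Monotonicity in the means sandwiches the walk between walks with constant mean `r`. For these the
ballot identity `Pr[ESC_L^R] = E[(L - N)⁺] / L` holds, where `N ∼ Po(r L)`. Since `L - N` has mean
`L (1 - r)` and variance `r L`, its positive part has expectation between `L (1 - r)` and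
`L (1 - r) + r / (2 (1 - r))`; with `1 - r ≈ ε`, the last term is `O(1 / (L ε²))` relative to
`L (1 - r)`.
-/

open Filter Topology Real Finset

lemma hasSum_prod_of_finset {α β M : Type*} [AddCommMonoid M] [TopologicalSpace M]
    [ContinuousAdd M] {f : α × β → M} {c : α → M} {s : Finset α}
    (hf : ∀ a ∈ s, HasSum (fun b => f (a, b)) (c a)) (hs : ∀ a ∉ s, ∀ b, f (a, b) = 0) :
    HasSum f (∑ a ∈ s, c a) := by
  classical
  have hslice : ∀ a ∈ s, HasSum (fun x : α × β => if x.1 = a then f x else 0) (c a) := by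
    intro a ha
    rw [← (Prod.mk_right_injective a).hasSum_iff]
    · simpa [Function.comp_def] using hf a ha
    · rintro ⟨a', b⟩ hx
      exact if_neg fun h => hx ⟨b, by rw [← h]⟩
  convert hasSum_sum hslice using 1
  ext ⟨a, b⟩
  by_cases ha : a ∈ s
  · simp [ha]
  · simp [hs a ha b]

section Poisson

lemma poissonP_nonneg {r : ℝ} (hr : 0 ≤ r) (m : ℕ) : 0 ≤ poissonP r m := by
  unfold poissonP
  positivity

lemma add_one_mul_poissonP_succ (r : ℝ) (m : ℕ) :
    ((m : ℝ) + 1) * poissonP r (m + 1) = r * poissonP r m := by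
  simp only [poissonP, Nat.factorial_succ, Nat.cast_mul, Nat.cast_succ]
  field_simp
  ring

lemma hasSum_poissonP (r : ℝ) : HasSum (poissonP r) 1 := by
  have hexp := (NormedSpace.expSeries_div_hasSum_exp (𝔸 := ℝ) r).mul_left (Real.exp (-r))
  rw [← Real.exp_eq_exp_ℝ, ← Real.exp_add, neg_add_cancel, Real.exp_zero] at hexp
  exact hexp.congr_fun fun _ => mul_div_assoc ..

lemma hasSum_mul_poissonP (r : ℝ) : HasSum (fun m : ℕ => (m : ℝ) * poissonP r m) r := by
  rw [← hasSum_nat_add_iff' 1]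
  simpa [add_one_mul_poissonP_succ] using (hasSum_poissonP r).mul_left r

lemma hasSum_sq_mul_poissonP (r : ℝ) :
    HasSum (fun m : ℕ => (m : ℝ) ^ 2 * poissonP r m) (r ^ 2 + r) := by
  have hshift : HasSum (fun m : ℕ => ((m + 1 : ℕ) : ℝ) ^ 2 * poissonP r (m + 1)) (r * (r + 1)) :=
    (((hasSum_mul_poissonP r).add (hasSum_poissonP r)).mul_left r).congr_fun fun m => by
      push_cast
      linear_combination ((m : ℝ) + 1) * add_one_mul_poissonP_succ r m
  rw [← hasSum_nat_add_iff' 1]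
  simpa [mul_add, sq] using hshift

lemma hasSum_sub_mul_poissonP (r c : ℝ) :
    HasSum (fun m : ℕ => (c - m) * poissonP r m) (c - r) := by
  simpa [sub_mul] using ((hasSum_poissonP r).mul_left c).sub (hasSum_mul_poissonP r)

lemma hasSum_sub_sq_mul_poissonP (r : ℝ) :
    HasSum (fun m : ℕ => ((m : ℝ) - r) ^ 2 * poissonP r m) r := by
  have hexpand := ((hasSum_sq_mul_poissonP r).sub ((hasSum_mul_poissonP r).mul_left (2 * r))).add
    ((hasSum_poissonP r).mul_left (r ^ 2))
  rw [show r ^ 2 + r - 2 * r * r + r ^ 2 * 1 = r by ring] at hexpand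
  exact hexpand.congr_fun fun m => by ring

lemma sub_le_sum_range_sub_mul_poissonP {r : ℝ} (hr : 0 ≤ r) (n : ℕ) :
    n - r ≤ ∑ m ∈ range (n + 1), ((n : ℝ) - m) * poissonP r m := by
  have htail := (hasSum_nat_add_iff' (n + 1)).2 (hasSum_sub_mul_poissonP r n)
  rw [← sub_nonpos]
  refine htail.nonpos fun m => mul_nonpos_of_nonpos_of_nonneg ?_ (poissonP_nonneg hr _)
  push_cast
  linarith [(Nat.cast_nonneg m : (0 : ℝ) ≤ m)]

lemma sum_range_sub_mul_poissonP_le {r : ℝ} {n : ℕ} (hr : 0 ≤ r) (hrn : r < n) :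
    ∑ m ∈ range (n + 1), ((n : ℝ) - m) * poissonP r m ≤ (n - r) + r / (2 * (n - r)) := by
  have hc : 0 < n - r := sub_pos.2 hrn
  have hsum : HasSum (fun m : ℕ => ((n - m : ℝ) + (m - r) ^ 2 / (2 * (n - r))) * poissonP r m)
      ((n - r) + r / (2 * (n - r))) := by
    simpa only [add_mul, div_mul_eq_mul_div] using (hasSum_sub_mul_poissonP r n).add
      ((hasSum_sub_sq_mul_poissonP r).div_const (2 * (n - r)))
  -- With `c = n - r` and `x = n - m`, this is `x + (x - c)² / (2 c) = (x² + c²) / (2 c)`.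
  have hcompl (m : ℕ) : (n - m : ℝ) + (m - r) ^ 2 / (2 * (n - r))
      = ((n - m) ^ 2 + (n - r) ^ 2) / (2 * (n - r)) := by
    field_simp
    ring
  calc ∑ m ∈ range (n + 1), ((n : ℝ) - m) * poissonP r m
      ≤ ∑ m ∈ range (n + 1), ((n - m : ℝ) + (m - r) ^ 2 / (2 * (n - r))) * poissonP r m :=
        sum_le_sum fun m _ => mul_le_mul_of_nonneg_right
          (le_add_of_nonneg_right (by positivity)) (poissonP_nonneg hr m)
    _ ≤ (n - r) + r / (2 * (n - r)) :=
        sum_le_hasSum _ (fun m _ => mul_nonneg (by rw [hcompl]; positivity)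
          (poissonP_nonneg hr m)) hsum

end Poisson

section PoissonSeries

open PowerSeries

/-- The probability generating series of `Po(r)`; multiplying by it convolves a sequence with the
Poisson point masses. -/
noncomputable def poissonSeries (r : ℝ) : PowerSeries ℝ := mk (poissonP r)

lemma poissonSeries_eq_C_mul_rescale_exp (r : ℝ) :
    poissonSeries r = C (Real.exp (-r)) * rescale r (PowerSeries.exp ℝ) := by
  ext m
  simp [poissonSeries, poissonP, div_eq_mul_inv, mul_assoc]

lemma poissonSeries_zero : poissonSeries 0 = 1 := by
  simp [poissonSeries_eq_C_mul_rescale_exp]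

lemma poissonSeries_add (a b : ℝ) :
    poissonSeries (a + b) = poissonSeries a * poissonSeries b := by
  simp only [poissonSeries_eq_C_mul_rescale_exp, neg_add, Real.exp_add, map_mul,
    ← exp_mul_exp_eq_exp_add]
  ring

lemma coeff_poissonSeries_mul (r : ℝ) (f : PowerSeries ℝ) (k : ℕ) :
    coeff k (poissonSeries r * f) = ∑ x ∈ antidiagonal k, poissonP r x.1 * coeff x.2 f := by
  simp [poissonSeries, coeff_mul]

lemma coeff_poissonSeries_mul_mono {r : ℝ} (hr : 0 ≤ r)
    {f g : PowerSeries ℝ} (hfg : ∀ m, coeff m f ≤ coeff m g) (k : ℕ) :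
    coeff k (poissonSeries r * f) ≤ coeff k (poissonSeries r * g) := by
  simp only [coeff_poissonSeries_mul]
  gcongr with x
  · exact poissonP_nonneg hr _
  · exact hfg _

lemma coeff_poissonSeries_mul_le {r : ℝ} (hr : 0 ≤ r) {f : PowerSeries ℝ}
    (hf : ∀ m, 0 ≤ coeff m f) (hmono : Monotone fun m => coeff m f) (k : ℕ) :
    coeff k (poissonSeries r * f) ≤ coeff k f :=
  calc coeff k (poissonSeries r * f)
      = ∑ x ∈ antidiagonal k, poissonP r x.1 * coeff x.2 f := coeff_poissonSeries_mul r f k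
    _ ≤ ∑ x ∈ antidiagonal k, poissonP r x.1 * coeff k f :=
        sum_le_sum fun _ hx => mul_le_mul_of_nonneg_left
          (hmono (HasAntidiagonal.antidiagonal.snd_le hx)) (poissonP_nonneg hr _)
    _ = (∑ m ∈ range (k + 1), poissonP r m) * coeff k f := by
        rw [← sum_mul, Finset.Nat.sum_antidiagonal_eq_sum_range_succ_mk]
    _ ≤ 1 * coeff k f := by
        gcongr
        · exact hf k
        · exact sum_le_hasSum _ (fun m _ => poissonP_nonneg hr m) (hasSum_poissonP r)
    _ = coeff k f := one_mul _

lemma coeff_poissonSeries_mul_anti {a b : ℝ} (ha : 0 ≤ a) (hab : a ≤ b) {f : PowerSeries ℝ}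
    (hf : ∀ m, 0 ≤ coeff m f) (hmono : Monotone fun m => coeff m f) (k : ℕ) :
    coeff k (poissonSeries b * f) ≤ coeff k (poissonSeries a * f) := by
  rw [← add_sub_cancel a b, poissonSeries_add, mul_assoc]
  exact coeff_poissonSeries_mul_mono ha
    (coeff_poissonSeries_mul_le (sub_nonneg.2 hab) hf hmono) k

end PoissonSeries

section EscapeProbability

/-- The escape condition for the rightwalk started at height `k`, which makes first-step recursion
possible; `rightOK` is the case `k = 0`. -/
def rightOKFrom (L k : ℕ) (z : Fin L → ℕ) : Prop :=
  ∀ t, 1 ≤ t → t ≤ L → (∑ i ∈ Finset.univ.filter (fun i : Fin L => (i : ℕ) < t), z i) < t + k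

lemma rightOKFrom_cons {L k j : ℕ} {z : Fin L → ℕ} :
    rightOKFrom (L + 1) k (Fin.cons j z : Fin (L + 1) → ℕ) ↔
      j ≤ k ∧ rightOKFrom L (k - j + 1) z := by
  have hsum (s : ℕ) : ∑ i ∈ univ.filter (fun i : Fin (L + 1) => (i : ℕ) < s + 1),
        (Fin.cons j z : Fin (L + 1) → ℕ) i
      = j + ∑ i ∈ univ.filter (fun i : Fin L => (i : ℕ) < s), z i := by
    simp [Finset.sum_filter, Fin.sum_univ_succ]
  constructor
  · intro h
    have hj : j ≤ k := by
      have hfirst := h 1 le_rfl (by omega)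
      rw [hsum 0] at hfirst
      omega
    refine ⟨hj, fun t ht htL => ?_⟩
    have hnext := h (t + 1) (by omega) (by omega)
    rw [hsum] at hnext
    omega
  · rintro ⟨hj, h⟩ (_ | _ | s) ht htL
    · omega
    · rw [hsum]
      simp only [Nat.not_lt_zero, filter_false, sum_empty]
      omega
    · rw [hsum]
      have hrest := h (s + 1) (by omega) (by omega)
      omega

/-- The probability that the rightwalk started at height `k`, with independent steps
`Z_i ∼ Po(lam i)`, stays positive up to time `L`, computed by conditioning on the first step. -/
noncomputable def rightEscapeProb : {L : ℕ} → (Fin L → ℝ) → ℕ → ℝ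
  | 0, _, _ => 1
  | _ + 1, lam, k =>
    ∑ x ∈ antidiagonal k, poissonP (lam 0) x.1 * rightEscapeProb (Fin.tail lam) (x.2 + 1)

lemma hasSum_rightEscapeProb {L : ℕ} (lam : Fin L → ℝ) (k : ℕ) :
    HasSum (fun z : Fin L → ℕ => (∏ i, poissonP (lam i) (z i)) * ind (rightOKFrom L k z))
      (rightEscapeProb lam k) := by
  induction L generalizing k with
  | zero =>
    have hOK (z : Fin 0 → ℕ) : rightOKFrom 0 k z := fun t _ _ => by omega
    simp [hOK, ind, rightEscapeProb]
  | succ L ih =>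
    rw [← (Fin.consEquiv fun _ : Fin (L + 1) => ℕ).hasSum_iff, rightEscapeProb,
      Finset.Nat.sum_antidiagonal_eq_sum_range_succ
        (fun i j => poissonP (lam 0) i * rightEscapeProb (Fin.tail lam) (j + 1))]
    refine hasSum_prod_of_finset (fun j hj => ?_) fun j hj z => ?_
    · have hjk : j ≤ k := mem_range_succ_iff.1 hj
      simpa [Fin.consEquiv, rightOKFrom_cons, hjk, Fin.prod_univ_succ, Fin.tail, mul_assoc]
        using (ih (Fin.tail lam) (k - j + 1)).mul_left (poissonP (lam 0) j)
    · have hjk : ¬ j ≤ k := mt mem_range_succ_iff.2 hj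
      simp [Fin.consEquiv, rightOKFrom_cons, hjk, ind]

lemma escRLProbV_eq_rightEscapeProb (lam : ℕ → ℝ) (L : ℕ) :
    escRLProbV lam L = rightEscapeProb (fun i : Fin L => lam i) 0 :=
  (hasSum_rightEscapeProb (fun i : Fin L => lam i) 0).tsum_eq

open PowerSeries

lemma rightEscapeProb_succ {L : ℕ} (lam : Fin (L + 1) → ℝ) (k : ℕ) :
    rightEscapeProb lam k = coeff k (poissonSeries (lam 0) *
      mk fun j => rightEscapeProb (Fin.tail lam) (j + 1)) := by
  simp [rightEscapeProb, coeff_poissonSeries_mul]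

lemma rightEscapeProb_nonneg {L : ℕ} {lam : Fin L → ℝ} (hlam : 0 ≤ lam) (k : ℕ) :
    0 ≤ rightEscapeProb lam k := by
  induction L generalizing k with
  | zero => exact zero_le_one
  | succ L ih =>
    exact sum_nonneg fun x _ => mul_nonneg (poissonP_nonneg (hlam 0) _)
      (ih (fun i => hlam i.succ) _)

lemma rightEscapeProb_mono {L : ℕ} {lam : Fin L → ℝ} (hlam : 0 ≤ lam) :
    Monotone (rightEscapeProb lam) := by
  induction L with
  | zero => exact monotone_const
  | succ L ih =>
    have htail : 0 ≤ Fin.tail lam := fun i => hlam i.succ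
    refine monotone_nat_of_le_succ fun k => ?_
    rw [rightEscapeProb, rightEscapeProb, Finset.Nat.sum_antidiagonal_succ']
    refine le_add_of_nonneg_of_le (mul_nonneg (poissonP_nonneg (hlam 0) _)
      (rightEscapeProb_nonneg htail _)) (sum_le_sum fun x _ => ?_)
    exact mul_le_mul_of_nonneg_left (ih htail (Nat.le_succ _)) (poissonP_nonneg (hlam 0) _)

lemma rightEscapeProb_anti {L : ℕ} {lam lam' : Fin L → ℝ} (hlam : 0 ≤ lam) (hle : lam ≤ lam')
    (k : ℕ) : rightEscapeProb lam' k ≤ rightEscapeProb lam k := by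
  induction L generalizing k with
  | zero => exact le_rfl
  | succ L ih =>
    have htail : 0 ≤ Fin.tail lam := fun i => hlam i.succ
    rw [rightEscapeProb_succ, rightEscapeProb_succ]
    set f := fun j => rightEscapeProb (Fin.tail lam) (j + 1)
    set f' := fun j => rightEscapeProb (Fin.tail lam') (j + 1)
    calc coeff k (poissonSeries (lam' 0) * mk f')
        ≤ coeff k (poissonSeries (lam' 0) * mk f) := by
          refine coeff_poissonSeries_mul_mono ((hlam 0).trans (hle 0)) (fun m => ?_) k
          rw [coeff_mk, coeff_mk]
          exact ih htail (fun i => hle i.succ) (m + 1)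
      _ ≤ coeff k (poissonSeries (lam 0) * mk f) := by
          refine coeff_poissonSeries_mul_anti (hlam 0) (hle 0) (fun m => ?_) (fun m n hmn => ?_) k
          · simpa only [coeff_mk] using rightEscapeProb_nonneg htail (m + 1)
          · simpa only [coeff_mk] using rightEscapeProb_mono htail (Nat.succ_le_succ hmn)

end EscapeProbability

section ConstantMean

open PowerSeries

/-- The generating series, over the starting height, of the escape probabilities up to time `L` of
the rightwalk with i.i.d. steps `Po(r)`. -/
noncomputable def rightEscapeSeries (r : ℝ) (L : ℕ) : PowerSeries ℝ :=
  mk (rightEscapeProb fun _ : Fin L => r)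

lemma X_mul_rightEscapeSeries_succ (r : ℝ) (L : ℕ) :
    X * rightEscapeSeries r (L + 1) = poissonSeries r *
      (rightEscapeSeries r L - C (rightEscapeProb (fun _ : Fin L => r) 0)) := by
  have hstep : rightEscapeSeries r (L + 1) =
      poissonSeries r * mk fun j => rightEscapeProb (fun _ : Fin L => r) (j + 1) := by
    ext k
    rw [rightEscapeSeries, coeff_mk, rightEscapeProb_succ]
    rfl
  have hshift := sub_const_eq_X_mul_shift (rightEscapeSeries r L)
  simp only [rightEscapeSeries, coeff_mk, constantCoeff_mk] at hshift
  rw [hstep, rightEscapeSeries, hshift]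
  ring

/-- The generating series of the ballot weights `(a - m) / a * Pr[Po(r a) = m]`, written without
division so that `a = 0` is covered. -/
noncomputable def ballotSeries (r : ℝ) (a : ℕ) : PowerSeries ℝ :=
  poissonSeries (r * a) * (1 - C r * X)

lemma ballotSeries_succ (r : ℝ) (a : ℕ) :
    ballotSeries r (a + 1) = ballotSeries r a * poissonSeries r := by
  rw [ballotSeries, ballotSeries, Nat.cast_succ, mul_add_one, poissonSeries_add]
  ring

lemma natCast_mul_coeff_ballotSeries (r : ℝ) (a m : ℕ) :
    (a : ℝ) * coeff m (ballotSeries r a) = (a - m) * poissonP (r * a) m := by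
  cases m with
  | zero => simp [ballotSeries, poissonSeries]
  | succ m =>
    have hcoeff : coeff (m + 1) (ballotSeries r a)
        = poissonP (r * a) (m + 1) - r * poissonP (r * a) m := by
      rw [ballotSeries, mul_sub, mul_one, mul_left_comm, map_sub, coeff_C_mul, coeff_succ_mul_X]
      simp [poissonSeries]
    rw [hcoeff]
    push_cast
    linear_combination add_one_mul_poissonP_succ (r * a) m

lemma coeff_ballotSeries_self {a : ℕ} (ha : a ≠ 0) (r : ℝ) :
    coeff a (ballotSeries r a) = 0 := by
  simpa [ha] using natCast_mul_coeff_ballotSeries r a a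

-- Moving a step from the escape series to the ballot series changes the coefficient by a multiple
-- of the diagonal ballot coefficient, which vanishes.
lemma coeff_ballotSeries_mul_rightEscapeSeries (r : ℝ) (a b : ℕ) :
    coeff a (ballotSeries r a * rightEscapeSeries r b) =
      rightEscapeProb (fun _ : Fin (a + b) => r) 0 := by
  induction a generalizing b with
  | zero =>
    rw [Nat.zero_add]
    simp [ballotSeries, poissonSeries_zero, rightEscapeSeries]
  | succ a ih =>
    have hmove : ballotSeries r (a + 1) * rightEscapeSeries r b =
        X * (ballotSeries r a * rightEscapeSeries r (b + 1)) +
          C (rightEscapeProb (fun _ : Fin b => r) 0) * ballotSeries r (a + 1) := by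
      rw [ballotSeries_succ]
      linear_combination -ballotSeries r a * X_mul_rightEscapeSeries_succ r b
    rw [hmove, map_add, coeff_succ_X_mul, coeff_C_mul, coeff_ballotSeries_self a.succ_ne_zero,
      mul_zero, add_zero, ih, Nat.add_right_comm, Nat.add_assoc]

lemma natCast_mul_rightEscapeProb_const (r : ℝ) (L : ℕ) :
    L * rightEscapeProb (fun _ : Fin L => r) 0 =
      ∑ m ∈ range (L + 1), ((L : ℝ) - m) * poissonP (r * L) m := by
  have hballot := coeff_ballotSeries_mul_rightEscapeSeries r L 0
  rw [Nat.add_zero] at hballot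
  rw [← hballot, coeff_mul, Finset.Nat.sum_antidiagonal_eq_sum_range_succ
      (fun i j => coeff i (ballotSeries r L) * coeff j (rightEscapeSeries r 0)), mul_sum]
  simp [rightEscapeSeries, rightEscapeProb, natCast_mul_coeff_ballotSeries]

end ConstantMean

section Bounds

lemma one_sub_le_rightEscapeProb_const {r : ℝ} {L : ℕ} (hr : 0 ≤ r) (hL : 0 < L) :
    1 - r ≤ rightEscapeProb (fun _ : Fin L => r) 0 := by
  refine le_of_mul_le_mul_left ?_ (Nat.cast_pos'.2 hL : (0 : ℝ) < L)
  rw [natCast_mul_rightEscapeProb_const]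
  calc L * (1 - r) = L - r * L := by ring
    _ ≤ ∑ m ∈ range (L + 1), ((L : ℝ) - m) * poissonP (r * L) m :=
        sub_le_sum_range_sub_mul_poissonP (by positivity) L

lemma rightEscapeProb_const_le {r : ℝ} {L : ℕ} (hr : 0 ≤ r) (hr1 : r < 1) (hL : 0 < L) :
    rightEscapeProb (fun _ : Fin L => r) 0 ≤ (1 - r) + r / (2 * (1 - r) * L) := by
  have hL' : (0 : ℝ) < L := Nat.cast_pos'.2 hL
  refine le_of_mul_le_mul_left ?_ hL'
  rw [natCast_mul_rightEscapeProb_const]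
  have hr1' : 1 - r ≠ 0 := (sub_pos.2 hr1).ne'
  calc ∑ m ∈ range (L + 1), ((L : ℝ) - m) * poissonP (r * L) m
      ≤ (L - r * L) + r * L / (2 * (L - r * L)) :=
        sum_range_sub_mul_poissonP_le (by positivity) (mul_lt_of_lt_one_left hL' hr1)
    _ = L * ((1 - r) + r / (2 * (1 - r) * L)) := by
        rw [← one_sub_mul]
        field_simp

variable {lam : ℕ → ℝ} {L : ℕ}

lemma one_sub_le_escRLProbV {r : ℝ} (hL : 0 < L) (hlam : ∀ i < L, 0 ≤ lam i)
    (hle : ∀ i < L, lam i ≤ r) : 1 - r ≤ escRLProbV lam L := by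
  rw [escRLProbV_eq_rightEscapeProb]
  exact (one_sub_le_rightEscapeProb_const ((hlam 0 hL).trans (hle 0 hL)) hL).trans
    (rightEscapeProb_anti (fun i => hlam i i.2) (fun i => hle i i.2) 0)

lemma escRLProbV_le {r : ℝ} (hL : 0 < L) (hr : 0 ≤ r) (hr1 : r < 1)
    (hle : ∀ i < L, r ≤ lam i) : escRLProbV lam L ≤ (1 - r) + r / (2 * (1 - r) * L) := by
  rw [escRLProbV_eq_rightEscapeProb]
  exact (rightEscapeProb_anti (fun _ => hr) (fun i => hle i i.2) 0).trans
    (rightEscapeProb_const_le hr hr1 hL)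

lemma abs_escRLProbV_div_sub_one_le {e δ : ℝ} (he : 0 < e) (hδ : 0 ≤ δ) (hL : 0 < L)
    (hlam : ∀ i < L, 0 ≤ lam i) (hclose : ∀ i < L, |lam i - (1 - e)| ≤ δ * e) :
    |escRLProbV lam L / e - 1| ≤ δ + 1 / (L * e ^ 2) := by
  have : (0 : ℝ) < L := Nat.cast_pos'.2 hL
  have hlower : 1 - (1 - (1 - δ) * e) ≤ escRLProbV lam L :=
    one_sub_le_escRLProbV hL hlam fun i hi => by linarith [(abs_le.1 (hclose i hi)).2]
  have hupper : escRLProbV lam L ≤ (1 + δ) * e + 1 / (L * e) := by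
    set r := max 0 (1 - (1 + δ) * e) with hr
    have hr1 : r < 1 := max_lt one_pos (by nlinarith)
    have hrlam : ∀ i < L, r ≤ lam i := fun i hi =>
      max_le (hlam i hi) (by linarith [(abs_le.1 (hclose i hi)).1])
    have herror : r / (2 * (1 - r) * L) ≤ 1 / (L * e) := by
      rcases max_cases 0 (1 - (1 + δ) * e) with ⟨h, -⟩ | ⟨h, -⟩
      · rw [hr, h, zero_div]
        positivity
      · have : e ≤ 2 * (1 - r) := by rw [hr, h]; nlinarith
        rw [mul_comm (L : ℝ)]
        gcongr
    linarith [escRLProbV_le hL (le_max_left _ _) hr1 hrlam, le_max_right 0 (1 - (1 + δ) * e)]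
  have hscale : 1 / (L * e) = 1 / (L * e ^ 2) * e := by field_simp
  have hpos : 0 < 1 / (L * e ^ 2) * e := by positivity
  rw [div_sub_one he.ne', abs_div, abs_of_pos he, div_le_iff₀ he, abs_le]
  constructor <;> linarith

end Bounds

theorem escRL_asymp_vary_general {ι : Type*} {l : Filter ι} (ε : ι → ℝ) (L : ι → ℕ)
    (lam : ι → ℕ → ℝ) (hεpos : ∀ n, 0 < ε n) (hlam0 : ∀ᶠ n in l, ∀ i < L n, 0 ≤ lam n i)
    (hLε : Tendsto (fun n => (L n : ℝ) * ε n ^ 2) l atTop)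
    (hlam : ∀ δ : ℝ, 0 < δ → ∀ᶠ n in l, ∀ i < L n, |lam n i - (1 - ε n)| ≤ δ * ε n) :
    Tendsto (fun n => escRLProbV (lam n) (L n) / ε n) l (𝓝 1) := by
  rw [Metric.tendsto_nhds]
  intro η hη
  have herror : Tendsto (fun n => 1 / ((L n : ℝ) * ε n ^ 2)) l (𝓝 0) :=
    hLε.const_div_atTop 1
  filter_upwards [hlam0, hlam (η / 2) (half_pos hη), herror.eventually_lt_const (half_pos hη),
    hLε.eventually_gt_atTop 0] with n hn0 hclose hsmall hpos
  have hL : 0 < L n := Nat.cast_pos'.1 (pos_of_mul_pos_left hpos (sq_nonneg _))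
  calc dist (escRLProbV (lam n) (L n) / ε n) 1
      ≤ η / 2 + 1 / (L n * ε n ^ 2) :=
        abs_escRLProbV_div_sub_one_le (hεpos n) (half_pos hη).le hL hn0 hclose
    _ < η := by linarith

/-- Corollary `t11`: if `ε = ε(n) → 0⁺`, `L = L(n) → ∞` with
`L ε² → ∞`, and `λ_1^R, …, λ_L^R` satisfy `λ_i^R = 1 - ε + o(ε)` uniformly in `i`,
then for the rightwalk with independent steps `Z_i^R ∼ Po(λ_i^R)` one has
`Pr[ESC_L^R] ∼ ε`. -/
theorem escRL_asymp_vary (ε : ℕ → ℝ) (L : ℕ → ℕ) (lam : ℕ → ℕ → ℝ)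
    (hεpos : ∀ n, 0 < ε n) (hε0 : Tendsto ε atTop (𝓝 0))
    (hL : Tendsto L atTop atTop)
    (hLε : Tendsto (fun n : ℕ => (L n : ℝ) * ε n ^ 2) atTop atTop)
    (hlam : ∀ δ : ℝ, 0 < δ → ∀ᶠ n in atTop, ∀ i < L n,
        |lam n i - (1 - ε n)| ≤ δ * ε n) :
    Tendsto (fun n : ℕ => escRLProbV (lam n) (L n) / ε n) atTop (𝓝 1) := by
  refine escRL_asymp_vary_general ε L lam hεpos ?_ hLε hlam
  filter_upwards [hlam 1 one_pos, hε0.eventually_le_const one_half_pos] with n hclose hε i hi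
  linarith [(abs_le.1 (hclose i hi)).1]
end

section
/- Let ε = ε(n) → 0⁺ and L = L(n) → ∞ with L·ε² → ∞. Let m = m(n) be integers with m = L(1 + ε + o(ε)), and let p_1, …, p_L be probabilities summing to 1 with p_i = 1/L + o(ε/L) uniformly in i. Place exactly m balls independently into bins 1,…,L, each ball going into bin i with probability p_i, and let Z_i be the number of balls in bin i. Then the probability f(m) that the resulting leftwalk satisfies ESC_L satisfies f(m) ~ 2ε as n → ∞. -/
open Filter Topology Real Finset

/-- Probability that, placing exactly `m` balls independently into bins `1,…,L`
(ball `j` goes into bin `i+1` with probability `p i`), the leftwalk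
`Y_0 = 1`, `Y_i = Y_{i-1} + Z_i - 1` defined by the bin counts `Z_i` satisfies
`ESC_L`, i.e. `Y_t > 0` (equivalently `#{j : balls in first t bins} ≥ t`)
for all `1 ≤ t ≤ L`. -/
noncomputable def fixedLeftProb (L m : ℕ) (p : ℕ → ℝ) : ℝ :=
  ∑ ω : Fin m → Fin L, (∏ j, p ((ω j : ℕ))) *
    ind (∀ t, 1 ≤ t → t ≤ L →
      t ≤ (Finset.univ.filter (fun j => ((ω j : ℕ) < t))).card)

/-- Probability that, placing exactly `m` balls independently into bins `1,…,L`
(ball `j` goes into bin `i+1` with probability `p i`), the rightwalk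
`Y_0^R = 0`, `Y_i^R = Y_{i-1}^R + 1 - Z_i^R` defined by the bin counts `Z_i^R`
satisfies `ESC_L^R`, i.e. `Y_t^R > 0` (equivalently
`#{j : balls in first t bins} ≤ t - 1`) for all `1 ≤ t ≤ L`. -/
noncomputable def fixedRightProb (L m : ℕ) (p : ℕ → ℝ) : ℝ :=
  ∑ ω : Fin m → Fin L, (∏ j, p ((ω j : ℕ))) *
    ind (∀ t, 1 ≤ t → t ≤ L →
      (Finset.univ.filter (fun j => ((ω j : ℕ) < t))).card < t)

/-!
Read the bins from right to left and let `q_r` be the total weight of the first `r` of them. With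
`m + 1 = L + b` balls, `ESC_L` fails exactly when, for some `r < L`, at least `r + b` balls lie in
these `r` bins. Removing the bins one at a time from the far end, the number of balls left is a
Markov chain which, starting below `L + b`, can only reach extinction at the boundary `n = r + b`.

For every constant `C`, the functions `(q_r + C) ^ n` and `n (q_r + C) ^ (n - 1)` of the number `n`
of balls in the first `r` bins are exactly harmonic for this chain. Criticality says that the drift
`(r + b) a_r - q_r` is `ε (1 + o(1))` uniformly in `r`. Under this condition
`(q_r + C) ^ n / (1 + C) ^ (L + b)` dominates the boundary values `q_r ^ n` of the extinction
probability when `C` is slightly below `2 ε`, which bounds extinction by `1 / (1 + C)`. For `C`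
slightly above `2 ε` a combination of both functions is dominated by these boundary values, and it
vanishes at the boundary of the bin `r₀ = L / 2`, so that nothing need be known about the bins
before `r₀`; the price is an error of order `1 / (L ε)`, which is `o(ε)`.
-/

/-- The sum of `Φ` over all placements of `n` labelled balls into the bins `0, …, L - 1`, each ball
in bin `i` having weight `a i`. A placement is passed to `Φ` as the multiset of occupied bins. -/
noncomputable def occupancySum (a : ℕ → ℝ) (L n : ℕ) (Φ : Multiset ℕ → ℝ) : ℝ :=
  ∑ ω : Fin n → Fin L, (∏ j, a (ω j)) * Φ (univ.val.map fun j => (ω j : ℕ))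

lemma occupancySum_zero_balls (a : ℕ → ℝ) (L : ℕ) (Φ : Multiset ℕ → ℝ) :
    occupancySum a L 0 Φ = Φ 0 := by
  simp [occupancySum]

lemma occupancySum_succ_balls (a : ℕ → ℝ) (L n : ℕ) (Φ : Multiset ℕ → ℝ) :
    occupancySum a L (n + 1) Φ =
      ∑ i ∈ range L, a i * occupancySum a L n fun s => Φ (i ::ₘ s) := by
  simp only [occupancySum]
  rw [← Equiv.sum_comp (Fin.consEquiv fun _ => Fin L), Fintype.sum_prod_type, Finset.sum_range]
  refine sum_congr rfl fun i _ => ?_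
  rw [mul_sum]
  refine sum_congr rfl fun ω _ => ?_
  simp [Fin.prod_univ_succ, Fin.univ_val_map, List.ofFn_succ, mul_assoc]

lemma occupancySum_succ_bins (a : ℕ → ℝ) (L n : ℕ) (Φ : Multiset ℕ → ℝ) :
    occupancySum a (L + 1) n Φ = ∑ ij ∈ antidiagonal n, (n.choose ij.1 : ℝ) *
      (a L ^ ij.1 * occupancySum a L ij.2 fun s => Φ (Multiset.replicate ij.1 L + s)) := by
  induction n generalizing Φ with
  | zero => simp [occupancySum_zero_balls]
  | succ n ih =>
    rw [occupancySum_succ_balls, sum_range_succ, sum_antidiagonal_choose_succ_mul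
      fun i j => a L ^ i * occupancySum a L j fun s => Φ (Multiset.replicate i L + s)]
    simp only [ih, occupancySum_succ_balls, mul_sum]
    congr 1
    · rw [sum_comm]
      refine sum_congr rfl fun ij _ => sum_congr rfl fun i _ => ?_
      simp only [Multiset.add_cons]
      ring
    · refine sum_congr rfl fun ij hij => ?_
      rw [Nat.choose_symm_of_eq_add (mem_antidiagonal.1 hij).symm]
      simp only [Multiset.replicate_succ, Multiset.cons_add]
      ring

/-- In the bins `0, …, L - 1`, the balls `s` never fill the first `r < L` bins with `r + b` balls or
more. When `s` consists of `L + b - 1` balls and the bins are read in reverse order, this is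
`ESC_L`. -/
def Survives (b L : ℕ) (s : Multiset ℕ) : Prop :=
  ∀ r < L, s.countP (· < r) < r + b

/-- The total weight of the placements of `n` balls into `L` bins that survive with surplus `b`. -/
noncomputable def survivalWeight (a : ℕ → ℝ) (b L n : ℕ) : ℝ :=
  occupancySum a L n fun s => ind (Survives b L s)

lemma survives_succ_iff {b L z : ℕ} {s : Multiset ℕ} (hs : ∀ i ∈ s, i < L) :
    Survives b (L + 1) (Multiset.replicate z L + s) ↔ s.card < L + b ∧ Survives b L s := by
  have hcount : ∀ r ≤ L, (Multiset.replicate z L + s).countP (· < r) = s.countP (· < r) := by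
    intro r hr
    rw [Multiset.countP_add, add_eq_right, Multiset.countP_eq_zero]
    intro i hi
    rw [Multiset.eq_of_mem_replicate hi]
    exact hr.not_gt
  rw [← Multiset.countP_eq_card.2 hs, and_comm]
  simp only [Survives]
  rw [Nat.forall_lt_succ_right, hcount L le_rfl]
  exact and_congr_left' (forall₂_congr fun r hr => by rw [hcount r hr.le])

/-- The sum of `f` over the number of balls left after each of `n` balls goes into the next bin
with weight `c` and is left over with weight `1`. -/
def binomialTransform (c : ℝ) (f : ℕ → ℝ) (n : ℕ) : ℝ :=
  ∑ ij ∈ antidiagonal n, (n.choose ij.1 : ℝ) * (c ^ ij.1 * f ij.2)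

lemma survivalWeight_zero (a : ℕ → ℝ) (b n : ℕ) : survivalWeight a b 0 n = 0 ^ n := by
  cases n <;> simp [survivalWeight, occupancySum, ind, Survives]

lemma survivalWeight_succ (a : ℕ → ℝ) (b L n : ℕ) :
    survivalWeight a b (L + 1) n = binomialTransform (a L)
      (fun w => if w < L + b then survivalWeight a b L w else 0) n := by
  rw [survivalWeight, occupancySum_succ_bins, binomialTransform]
  refine sum_congr rfl fun ij _ => ?_
  simp only [survivalWeight, occupancySum]
  have hstep (ω : Fin ij.2 → Fin L) := survives_succ_iff (b := b) (L := L) (z := ij.1)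
    (s := univ.val.map fun j => (ω j : ℕ)) (by simp)
  simp only [hstep, Multiset.card_map, card_val, card_univ, Fintype.card_fin]
  split_ifs with h
  · simp only [h, true_and]
  · simp [h, ind]

lemma card_filter_rev_lt_add_countP {L m t : ℕ} (ω : Fin m → Fin L) (ht : t ≤ L) :
    #{j | ((ω j).rev : ℕ) < t} + (univ.val.map fun j => (ω j : ℕ)).countP (· < L - t) = m := by
  rw [Multiset.countP_map, ← filter_val, card_val]
  have hrev (j : Fin m) : ((ω j).rev : ℕ) < t ↔ ¬ (ω j : ℕ) < L - t := by
    rw [Fin.val_rev]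
    omega
  simp only [hrev]
  rw [add_comm, card_filter_add_card_filter_not, card_univ, Fintype.card_fin]

lemma fixedLeftProb_eq_survivalWeight {L m b : ℕ} (p : ℕ → ℝ) (hb : m + 1 = L + b) :
    fixedLeftProb L m p = survivalWeight (fun i => p (L - 1 - i)) b L m := by
  rw [fixedLeftProb, survivalWeight, occupancySum,
    ← Equiv.sum_comp ((Equiv.refl (Fin m)).arrowCongr Fin.revPerm)]
  refine sum_congr rfl fun ω _ => ?_
  simp only [Equiv.arrowCongr_apply, Equiv.refl_symm, Equiv.coe_refl, Function.comp_id,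
    Function.comp_apply, Fin.revPerm_apply]
  congr 2
  · simp only [Fin.val_rev, Nat.sub_sub, add_comm]
  · refine propext ⟨fun h r hr => ?_, fun h t ht htL => ?_⟩
    · have := h (L - r) (by omega) (by omega)
      have := card_filter_rev_lt_add_countP ω (Nat.sub_le L r)
      rw [Nat.sub_sub_self hr.le] at this
      omega
    · have := h (L - t) (by omega)
      have := card_filter_rev_lt_add_countP ω htL
      omega

lemma binomialTransform_mono {c : ℝ} {f g : ℕ → ℝ} {n : ℕ} (hc : 0 ≤ c)
    (hfg : ∀ w ≤ n, f w ≤ g w) : binomialTransform c f n ≤ binomialTransform c g n :=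
  sum_le_sum fun ij hij => by
    have := hfg ij.2 (by have := mem_antidiagonal.1 hij; omega)
    gcongr

lemma binomialTransform_sub (c : ℝ) (f g : ℕ → ℝ) (n : ℕ) :
    binomialTransform c (fun w => f w - g w) n =
      binomialTransform c f n - binomialTransform c g n := by
  simp only [binomialTransform, mul_sub, sum_sub_distrib]

lemma binomialTransform_const_mul (c k : ℝ) (f : ℕ → ℝ) (n : ℕ) :
    binomialTransform c (fun w => k * f w) n = k * binomialTransform c f n := by
  simp only [binomialTransform, mul_sum, mul_left_comm]

lemma binomialTransform_pow (c x : ℝ) (n : ℕ) :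
    binomialTransform c (fun w => x ^ w) n = (x + c) ^ n := by
  rw [binomialTransform, add_comm, (Commute.all c x).add_pow']
  simp only [nsmul_eq_mul]

lemma binomialTransform_mul_pow_sub_one (c x : ℝ) (n : ℕ) :
    binomialTransform c (fun w => w * x ^ (w - 1)) n = n * (x + c) ^ (n - 1) := by
  have hsum : HasDerivAt (fun t => binomialTransform c (fun w => t ^ w) n)
      (binomialTransform c (fun w => w * x ^ (w - 1)) n) x :=
    HasDerivAt.fun_sum fun ij _ => ((hasDerivAt_pow ij.2 x).const_mul _).const_mul _
  have hpow : HasDerivAt (fun t => (t + c) ^ n) (n * (x + c) ^ (n - 1)) x := by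
    simpa using ((hasDerivAt_id x).add_const c).fun_pow n
  simp only [binomialTransform_pow] at hsum
  exact hsum.unique hpow

/-- The total weight of the first `r` bins. -/
def mass (a : ℕ → ℝ) (r : ℕ) : ℝ := ∑ i ∈ range r, a i

lemma mass_succ (a : ℕ → ℝ) (r : ℕ) : mass a (r + 1) = mass a r + a r :=
  sum_range_succ a r

/-- The total weight of the placements of `n` balls into `L` bins that do not survive. -/
noncomputable def extinctionWeight (a : ℕ → ℝ) (b L n : ℕ) : ℝ :=
  mass a L ^ n - survivalWeight a b L n

section Comparison

variable {a : ℕ → ℝ} {b : ℕ}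

lemma extinctionWeight_zero (n : ℕ) : extinctionWeight a b 0 n = 0 := by
  simp [extinctionWeight, mass, survivalWeight_zero]

lemma extinctionWeight_succ (L n : ℕ) :
    extinctionWeight a b (L + 1) n = binomialTransform (a L)
      (fun w => if w < L + b then extinctionWeight a b L w else mass a L ^ w) n := by
  rw [extinctionWeight, survivalWeight_succ, mass_succ, ← binomialTransform_pow,
    ← binomialTransform_sub]
  congr 1
  ext w
  split_ifs
  · rfl
  · rw [sub_zero]

lemma extinctionWeight_nonneg {L n : ℕ} (ha : ∀ r < L, 0 ≤ a r) :
    0 ≤ extinctionWeight a b L n := by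
  induction L generalizing n with
  | zero => rw [extinctionWeight_zero]
  | succ L ih =>
    have hmass : 0 ≤ mass a L :=
      sum_nonneg fun i hi => ha i ((mem_range.1 hi).trans (Nat.lt_succ_self L))
    rw [extinctionWeight_succ]
    refine sum_nonneg fun ij _ => ?_
    have := ha L (Nat.lt_succ_self L)
    have : 0 ≤ extinctionWeight a b L ij.2 := ih fun r hr => ha r (hr.trans (Nat.lt_succ_self L))
    dsimp only
    split_ifs <;> positivity

lemma extinctionWeight_le {G : ℕ → ℕ → ℝ} {L n : ℕ} (ha : ∀ r < L, 0 ≤ a r)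
    (hG₀ : ∀ n < b, 0 ≤ G 0 n)
    (hG : ∀ r < L, ∀ n < r + 1 + b, binomialTransform (a r) (G r) n ≤ G (r + 1) n)
    (hbdry : ∀ r < L, mass a r ^ (r + b) ≤ G r (r + b)) (hn : n < L + b) :
    extinctionWeight a b L n ≤ G L n := by
  induction L generalizing n with
  | zero => exact (extinctionWeight_zero n).trans_le (hG₀ n (by omega))
  | succ L ih =>
    rw [extinctionWeight_succ]
    refine (binomialTransform_mono (ha L (Nat.lt_succ_self L)) fun w hw => ?_).trans
      (hG L (Nat.lt_succ_self L) n hn)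
    split_ifs with hwL
    · exact ih (fun r hr => ha r (by omega)) (fun r hr => hG r (by omega))
        (fun r hr => hbdry r (by omega)) hwL
    · obtain rfl : w = L + b := by omega
      exact hbdry L (Nat.lt_succ_self L)

lemma le_extinctionWeight {G : ℕ → ℕ → ℝ} {r₀ L n : ℕ} (hr₀ : r₀ ≤ L) (ha : ∀ r < L, 0 ≤ a r)
    (hG₀ : ∀ n < r₀ + b, G r₀ n ≤ 0)
    (hG : ∀ r, r₀ ≤ r → r < L → ∀ n < r + 1 + b,
      G (r + 1) n ≤ binomialTransform (a r) (G r) n)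
    (hbdry : ∀ r, r₀ ≤ r → r < L → G r (r + b) ≤ mass a r ^ (r + b)) (hn : n < L + b) :
    G L n ≤ extinctionWeight a b L n := by
  induction L, hr₀ using Nat.le_induction generalizing n with
  | base => exact (hG₀ n hn).trans (extinctionWeight_nonneg ha)
  | succ L hL ih =>
    rw [extinctionWeight_succ]
    refine (hG L hL (Nat.lt_succ_self L) n hn).trans
      (binomialTransform_mono (ha L (Nat.lt_succ_self L)) fun w hw => ?_)
    split_ifs with hwL
    · exact ih (fun r hr => ha r (by omega)) (fun r hr hrL => hG r hr (by omega))
        (fun r hr hrL => hbdry r hr (by omega)) hwL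
    · obtain rfl : w = L + b := by omega
      exact hbdry L hL (Nat.lt_succ_self L)

end Comparison

lemma log_one_add_le_div_sqrt {t : ℝ} (ht : 0 ≤ t) : log (1 + t) ≤ t / √(1 + t) := by
  have hs : 0 < √(1 + t) := sqrt_pos.2 (by linarith)
  have hlog : 0 ≤ log √(1 + t) := log_nonneg (one_le_sqrt.2 (by linarith))
  have hsinh := self_le_sinh_iff.2 hlog
  rw [sinh_log hs, log_sqrt (by linarith)] at hsinh
  calc log (1 + t) ≤ √(1 + t) - (√(1 + t))⁻¹ := by linarith
    _ = t / √(1 + t) := by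
      field_simp
      rw [sq_sqrt (by linarith)]
      ring

lemma add_mul_sqrt_one_add_div_le {q p E : ℝ} (hq : 0 < q) (hp : 0 ≤ p) (hE : 0 ≤ E)
    (hsmall : 2 * (q + p) * p ≤ E * q) : (q + p) * √(1 + 2 * E / q) ≤ q + p + E := by
  refine abs_le_of_sq_le_sq' ?_ (by positivity) |>.2
  rw [mul_pow, sq_sqrt (by positivity), ← sub_nonneg]
  calc 0 ≤ E * (E * q - 2 * (q + p) * p) / q :=
        div_nonneg (mul_nonneg hE (sub_nonneg.2 hsmall)) hq.le
    _ = (q + p + E) ^ 2 - (q + p) ^ 2 * (1 + 2 * E / q) := by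
      field_simp
      ring

lemma one_add_div_pow_succ_le {q p E : ℝ} {N : ℕ} (hq : 0 < q) (hp : 0 ≤ p) (hE : 0 ≤ E)
    (hdrift : q + E ≤ N * p) (hsmall : 2 * (q + p) * p ≤ E * q) :
    (1 + 2 * E / (q + p)) ^ (N + 1) ≤ (1 + 2 * E / q) ^ N := by
  set B := 1 + 2 * E / q with hB
  set v := 2 * E * p / ((q + p) * (q + 2 * E)) with hv
  have hBpos : 0 < B := by positivity
  have hratio : 1 + 2 * E / (q + p) = B * (1 - v) := by
    rw [hB, hv]
    field_simp
    ring
  have hsqrt : (q + p) * √B ≤ (N + 1) * p := by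
    linarith [add_mul_sqrt_one_add_div_le hq hp hE hsmall]
  have hBexp : B ≤ exp ((N + 1 : ℕ) * v) := by
    rw [← log_le_iff_le_exp hBpos]
    calc log B ≤ 2 * E / q / √B := log_one_add_le_div_sqrt (by positivity)
      _ = 2 * E / ((q + p) * (q + 2 * E)) * ((q + p) * √B) := by
        have hsq : √B ^ 2 * q = q + 2 * E := by
          rw [sq_sqrt hBpos.le, hB]
          field_simp
        rw [← hsq]
        field_simp
      _ ≤ 2 * E / ((q + p) * (q + 2 * E)) * ((N + 1) * p) := by gcongr
      _ = (N + 1 : ℕ) * v := by push_cast; ring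
  have hA : 0 ≤ 1 - v := nonneg_of_mul_nonneg_right (hratio ▸ by positivity) hBpos
  calc (1 + 2 * E / (q + p)) ^ (N + 1) = B ^ N * (B * (1 - v) ^ (N + 1)) := by
        rw [hratio, mul_pow]
        ring
    _ ≤ B ^ N * (exp ((N + 1 : ℕ) * v) * exp (-v) ^ (N + 1)) := by
      gcongr
      exact one_sub_le_exp_neg v
    _ = B ^ N := by
      rw [← exp_nat_mul, ← exp_add, mul_neg, add_neg_cancel, exp_zero, mul_one]

lemma one_add_div_pow_le_pow_succ {q p C E : ℝ} {N : ℕ} (hq : 0 < q) (hp : 0 ≤ p) (hC : 0 ≤ C)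
    (hdrift : N * p ≤ q + E) (hsmall : E * (2 * (q + p) + C) ≤ C * q) :
    (1 + C / q) ^ N ≤ (1 + C / (q + p)) ^ (N + 1) := by
  set A := 1 + C / (q + p) with hA
  set u := C * p / (q * (q + p + C)) with hu
  have hratio : 1 + C / q = A * (1 + u) := by
    rw [hA, hu]
    field_simp
    ring
  have hexp : exp (N * u) ≤ A := by
    rw [← le_log_iff_exp_le (by positivity)]
    calc N * u = C * (N * p) / (q * (q + p + C)) := by rw [hu]; ring
      _ ≤ C * (q + E) / (q * (q + p + C)) := by gcongr
      _ ≤ 2 * (C / (q + p)) / (C / (q + p) + 2) := by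
        have : 2 * (C / (q + p)) / (C / (q + p) + 2) = C * 2 / (2 * (q + p) + C) := by
          field_simp
          ring
        rw [this, div_le_div_iff₀ (by positivity) (by positivity), mul_assoc, mul_assoc]
        gcongr C * ?_
        linarith
      _ ≤ log A := le_log_one_add_of_nonneg (by positivity)
  calc (1 + C / q) ^ N = A ^ N * (1 + u) ^ N := by rw [hratio, mul_pow]
    _ ≤ A ^ N * exp u ^ N := by
      gcongr
      rw [add_comm]
      exact add_one_le_exp u
    _ ≤ A ^ N * A := by
      rw [← exp_nat_mul]
      gcongr
    _ = A ^ (N + 1) := (pow_succ A N).symm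

section Boundary

variable {a : ℕ → ℝ} {b L : ℕ} {C E : ℝ}

/-- The ratio of the harmonic functions `(mass a r + C) ^ n` and `mass a r ^ n` at the extinction
boundary `n = r + b`. -/
noncomputable def boundaryTilt (a : ℕ → ℝ) (b : ℕ) (C : ℝ) (r : ℕ) : ℝ :=
  (1 + C / mass a r) ^ (r + b)

/-- The ratio of the harmonic functions `n * (mass a r + C) ^ (n - 1)` and `(mass a r + C) ^ n` at
the extinction boundary `n = r + b`. -/
noncomputable def boundarySlope (a : ℕ → ℝ) (b : ℕ) (C : ℝ) (r : ℕ) : ℝ :=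
  (r + b) / (mass a r + C)

lemma mass_le_mass (ha : ∀ r < L, 0 ≤ a r) {r s : ℕ} (hrs : r ≤ s) (hs : s ≤ L) :
    mass a r ≤ mass a s :=
  sum_le_sum_of_subset_of_nonneg (range_mono hrs)
    fun i hi _ => ha i ((mem_range.1 hi).trans_le hs)

lemma mass_nonneg (ha : ∀ r < L, 0 ≤ a r) {r : ℕ} (hr : r ≤ L) : 0 ≤ mass a r :=
  sum_nonneg fun i hi => ha i ((mem_range.1 hi).trans_le hr)

lemma mass_pos (ha : ∀ r < L, 0 < a r) {r : ℕ} (hr0 : 0 < r) (hr : r ≤ L) : 0 < mass a r :=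
  sum_pos (fun i hi => ha i ((mem_range.1 hi).trans_le hr)) (nonempty_range_iff.2 hr0.ne')

lemma pow_mul_boundaryTilt {r : ℕ} (hr : mass a r ≠ 0) :
    mass a r ^ (r + b) * boundaryTilt a b C r = (mass a r + C) ^ (r + b) := by
  rw [boundaryTilt, ← mul_pow, mul_add, mul_one, mul_div_cancel₀ _ hr]

lemma boundaryTilt_antitoneOn (ha : ∀ r < L, 0 < a r) (hE : 0 ≤ E)
    (hdrift : ∀ r < L, mass a r + E ≤ (r + b) * a r)
    (hsmall : ∀ r < L, 0 < r → 2 * (mass a r + a r) * a r ≤ E * mass a r) :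
    AntitoneOn (boundaryTilt a b (2 * E)) (Set.Icc 1 L) := by
  refine antitoneOn_of_succ_le Set.ordConnected_Icc fun r _ hr hrL => ?_
  have hrL : r < L := hrL.2
  rw [Nat.succ_eq_succ, boundaryTilt, boundaryTilt, mass_succ, Nat.succ_add]
  exact one_add_div_pow_succ_le (mass_pos ha hr.1 hrL.le) (ha r hrL).le hE
    (by exact_mod_cast hdrift r hrL) (hsmall r hrL hr.1)

lemma boundaryTilt_monotoneOn {r₀ : ℕ} (hr₀ : 0 < mass a r₀) (ha : ∀ r < L, 0 ≤ a r)
    (hC : 0 ≤ C) (hdrift : ∀ r, r₀ ≤ r → r < L → (r + b) * a r ≤ mass a r + E)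
    (hsmall : ∀ r, r₀ ≤ r → r < L → E * (2 * (mass a r + a r) + C) ≤ C * mass a r) :
    MonotoneOn (boundaryTilt a b C) (Set.Icc r₀ L) := by
  refine monotoneOn_of_le_succ Set.ordConnected_Icc fun r _ hr hrL => ?_
  have hrL : r < L := hrL.2
  have hmass : 0 < mass a r := hr₀.trans_le (mass_le_mass ha hr.1 hrL.le)
  rw [Nat.succ_eq_succ, boundaryTilt, boundaryTilt, mass_succ, Nat.succ_add]
  exact one_add_div_pow_le_pow_succ hmass (ha r hrL) hC (by exact_mod_cast hdrift r hr.1 hrL)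
    (hsmall r hr.1 hrL)

lemma boundarySlope_add_le_succ {r : ℕ} (hmass : 0 ≤ mass a r) (ha : 0 ≤ a r)
    (hmass_le : mass a (r + 1) ≤ 1) (hC : 0 < C) (hEC : E ≤ C)
    (hdrift : (r + b) * a r ≤ mass a r + E) :
    boundarySlope a b C r + (C - E) / (1 + C) ^ 2 ≤ boundarySlope a b C (r + 1) := by
  rw [mass_succ] at hmass_le
  have hdiff : boundarySlope a b C (r + 1) - boundarySlope a b C r =
      (mass a r + C - (r + b) * a r) / ((mass a r + C) * (mass a r + a r + C)) := by
    rw [boundarySlope, boundarySlope, mass_succ]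
    push_cast
    field_simp
    ring
  rw [add_comm, ← le_sub_iff_add_le, hdiff, sq]
  refine div_le_div₀ (by linarith) (by linarith) (by positivity) ?_
  gcongr
  all_goals linarith

lemma mul_le_boundarySlope_sub {r₀ r : ℕ} (ha : ∀ r < L, 0 ≤ a r) (hmass : mass a L ≤ 1)
    (hC : 0 < C) (hEC : E ≤ C) (hdrift : ∀ r, r₀ ≤ r → r < L → (r + b) * a r ≤ mass a r + E)
    (hr₀ : r₀ ≤ r) (hr : r ≤ L) :
    (L - r) * ((C - E) / (1 + C) ^ 2) ≤ boundarySlope a b C L - boundarySlope a b C r := by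
  have hmono : MonotoneOn (fun s => boundarySlope a b C s - s * ((C - E) / (1 + C) ^ 2))
      (Set.Icc r₀ L) := by
    refine monotoneOn_of_le_succ Set.ordConnected_Icc fun s _ hs hsL => ?_
    have hsL : s < L := hsL.2
    have hmass_le : mass a (s + 1) ≤ 1 :=
      (mass_le_mass ha hsL le_rfl).trans hmass
    have := boundarySlope_add_le_succ (mass_nonneg ha hsL.le) (ha s hsL) hmass_le hC hEC
      (hdrift s hs.1 hsL)
    rw [Nat.succ_eq_succ]
    push_cast
    linarith
  have := hmono ⟨hr₀, hr⟩ ⟨hr₀.trans hr, le_rfl⟩ hr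
  dsimp only at this
  linarith

lemma mul_pow_sub_one_eq_boundarySlope_mul {r : ℕ} (hr : mass a r + C ≠ 0) :
    ((r + b : ℕ) : ℝ) * (mass a r + C) ^ (r + b - 1) =
      boundarySlope a b C r * (mass a r + C) ^ (r + b) := by
  rcases Nat.eq_zero_or_pos (r + b) with h | h
  · have : (r : ℝ) + b = 0 := by exact_mod_cast h
    simp [boundarySlope, h, this]
  · rw [← mul_pow_sub_one h.ne', boundarySlope, ← mul_assoc, div_mul_cancel₀ _ hr, Nat.cast_add]

lemma extinctionWeight_le_of_le_boundaryTilt {K : ℝ} (ha : ∀ r < L, 0 < a r) (hb : b ≠ 0)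
    (hC : 0 ≤ C) (hK : 0 < K) (htilt : ∀ r < L, 0 < r → K ≤ boundaryTilt a b C r) {n : ℕ}
    (hn : n < L + b) :
    extinctionWeight a b L n ≤ K⁻¹ * (mass a L + C) ^ n := by
  refine extinctionWeight_le (G := fun r n => K⁻¹ * (mass a r + C) ^ n) (fun r hr => (ha r hr).le)
    ?_ ?_ ?_ hn
  · intro n _
    rw [mass, sum_range_zero]
    positivity
  · intro r _ n _
    rw [binomialTransform_const_mul, binomialTransform_pow, mass_succ, add_right_comm]
  · intro r hr
    rw [le_inv_mul_iff₀ hK]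
    rcases Nat.eq_zero_or_pos r with rfl | hr0
    · rw [mass, sum_range_zero, zero_add, zero_pow hb, mul_zero]
      positivity
    · have hq : 0 < mass a r := mass_pos ha hr0 hr.le
      rw [← pow_mul_boundaryTilt hq.ne', mul_comm]
      gcongr
      exact htilt r hr hr0

lemma le_extinctionWeight_of_boundaryTilt_le {r₀ : ℕ} {K s : ℝ} (hr₀ : 0 < mass a r₀)
    (hr₀L : r₀ ≤ L) (ha : ∀ r < L, 0 ≤ a r) (hC : 0 ≤ C) (hK : 0 < K) (hs : 0 < s)
    (htilt : ∀ r, r₀ ≤ r → r < L → boundaryTilt a b C r ≤ K)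
    (hslope : ∀ r, r₀ ≤ r → r < L → boundarySlope a b C r - boundarySlope a b C r₀ ≤ s) {n : ℕ}
    (hn : n < L + b) :
    (K * s)⁻¹ * (n * (mass a L + C) ^ (n - 1) - boundarySlope a b C r₀ * (mass a L + C) ^ n) ≤
      extinctionWeight a b L n := by
  refine le_extinctionWeight (r₀ := r₀) (G := fun r n => (K * s)⁻¹ *
    (n * (mass a r + C) ^ (n - 1) - boundarySlope a b C r₀ * (mass a r + C) ^ n)) hr₀L ha ?_ ?_ ?_
    hn
  · intro n hn
    refine mul_nonpos_of_nonneg_of_nonpos (by positivity) (sub_nonpos.2 ?_)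
    rcases n with _ | n
    · simp only [boundarySlope, Nat.cast_zero, zero_mul, pow_zero, mul_one]
      positivity
    · rw [pow_succ', ← mul_assoc, boundarySlope, div_mul_cancel₀ _ (by positivity),
        Nat.add_sub_cancel]
      gcongr
      exact_mod_cast hn.le
  · intro r _ _ n _
    rw [binomialTransform_const_mul, binomialTransform_sub, binomialTransform_const_mul,
      binomialTransform_mul_pow_sub_one, binomialTransform_pow, mass_succ, add_right_comm]
  · intro r h₀ hr
    have hq : 0 < mass a r := hr₀.trans_le (mass_le_mass ha h₀ hr.le)
    have htilt_nonneg : 0 ≤ boundaryTilt a b C r := by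
      rw [boundaryTilt]
      positivity
    rw [inv_mul_le_iff₀ (by positivity), mul_pow_sub_one_eq_boundarySlope_mul (by positivity),
      ← sub_mul, ← pow_mul_boundaryTilt hq.ne']
    calc (boundarySlope a b C r - boundarySlope a b C r₀) *
          (mass a r ^ (r + b) * boundaryTilt a b C r)
        ≤ s * (mass a r ^ (r + b) * K) := by
          gcongr
          exacts [hslope r h₀ hr, htilt r h₀ hr]
      _ = K * s * mass a r ^ (r + b) := by ring

lemma le_survivalWeight_of_le_drift {m : ℕ} (ha : ∀ r < L, 0 < a r) (hmass : mass a L = 1)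
    (hE : 0 < E)
    (hdrift : ∀ r < L, mass a r + E ≤ (r + b) * a r)
    (hsmall : ∀ r < L, 0 < r → 2 * (mass a r + a r) * a r ≤ E * mass a r) (hb : m + 1 = L + b) :
    1 - (1 + 2 * E)⁻¹ ≤ survivalWeight a b L m := by
  have hL : 0 < L := by
    by_contra! h
    simp [mass, Nat.le_zero.1 h] at hmass
  have hb0 : b ≠ 0 := by
    rintro rfl
    have := hdrift 0 hL
    simp only [mass, sum_range_zero, Nat.cast_zero, add_zero, zero_mul] at this
    linarith
  have hanti := boundaryTilt_antitoneOn ha hE.le hdrift hsmall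
  have htilt (r : ℕ) (hr : r < L) (hr0 : 0 < r) :
      (1 + 2 * E) ^ (m + 1) ≤ boundaryTilt a b (2 * E) r := by
    simpa only [boundaryTilt, hmass, div_one, hb] using hanti ⟨hr0, hr.le⟩ ⟨hL, le_rfl⟩ hr.le
  have hext := extinctionWeight_le_of_le_boundaryTilt ha hb0 (by positivity) (by positivity) htilt
    (by omega : m < L + b)
  have hpow : ((1 + 2 * E) ^ (m + 1))⁻¹ * (1 + 2 * E) ^ m = (1 + 2 * E)⁻¹ := by
    field_simp
    ring
  rw [extinctionWeight, hmass, one_pow, hpow] at hext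
  linarith

lemma survivalWeight_le_of_boundary_le {m r₀ : ℕ} (hr₀ : 0 < mass a r₀) (hr₀L : r₀ ≤ L)
    (ha : ∀ r < L, 0 ≤ a r) (hmass : mass a L = 1) (hC : 0 ≤ C)
    (htilt : ∀ r, r₀ ≤ r → r < L → boundaryTilt a b C r ≤ (1 + C) ^ (m + 1))
    (hslope : ∀ r, r₀ ≤ r → r < L → boundarySlope a b C r ≤ boundarySlope a b C L)
    (hslope₀ : boundarySlope a b C r₀ < boundarySlope a b C L) (hb : m + 1 = L + b) :
    survivalWeight a b L m ≤ 1 - (1 + C)⁻¹ +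
      ((1 + C) ^ 2 * (boundarySlope a b C L - boundarySlope a b C r₀))⁻¹ := by
  have hs : 0 < boundarySlope a b C L - boundarySlope a b C r₀ := sub_pos.2 hslope₀
  have hext := le_extinctionWeight_of_boundaryTilt_le hr₀ hr₀L ha hC (by positivity) hs htilt
    (fun r h₀ hr => sub_le_sub_right (hslope r h₀ hr) _) (by omega : m < L + b)
  have hslopeL : boundarySlope a b C L - (1 + C)⁻¹ = m / (1 + C) := by
    rw [boundarySlope, hmass, inv_eq_one_div, ← sub_div]
    congr 1
    rw [sub_eq_iff_eq_add]
    exact_mod_cast hb.symm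
  have hpow : m * (1 + C) ^ (m - 1) = (1 + C) ^ m * (boundarySlope a b C L - (1 + C)⁻¹) := by
    rw [hslopeL]
    rcases Nat.eq_zero_or_pos m with rfl | hm
    · simp
    · rw [← mul_pow_sub_one hm.ne']
      field_simp
  rw [extinctionWeight, hmass, one_pow, hpow] at hext
  set s := boundarySlope a b C L - boundarySlope a b C r₀ with hs_def
  have hvalue : ((1 + C) ^ (m + 1) * s)⁻¹ * ((1 + C) ^ m * (boundarySlope a b C L - (1 + C)⁻¹) -
      boundarySlope a b C r₀ * (1 + C) ^ m) = (1 + C)⁻¹ - ((1 + C) ^ 2 * s)⁻¹ := by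
    rw [← sub_add_cancel (boundarySlope a b C L) (boundarySlope a b C r₀), ← hs_def]
    field_simp
    ring
  linarith

lemma survivalWeight_le_of_drift_le {m r₀ : ℕ} (hr₀ : 0 < mass a r₀) (hr₀L : r₀ < L)
    (ha : ∀ r < L, 0 ≤ a r) (hmass : mass a L = 1) (hC : 0 < C) (hEC : E < C)
    (hdrift : ∀ r, r₀ ≤ r → r < L → (r + b) * a r ≤ mass a r + E)
    (hsmall : ∀ r, r₀ ≤ r → r < L → E * (2 * (mass a r + a r) + C) ≤ C * mass a r)
    (hb : m + 1 = L + b) :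
    survivalWeight a b L m ≤ C + 1 / ((L - r₀) * (C - E)) := by
  have hslope {r : ℕ} (h₀ : r₀ ≤ r) (hr : r ≤ L) :=
    mul_le_boundarySlope_sub ha hmass.le hC hEC.le hdrift h₀ hr
  have hstep : 0 < (C - E) / (1 + C) ^ 2 := div_pos (sub_pos.2 hEC) (by positivity)
  have hgap {r : ℕ} (hr : r < L) : (0 : ℝ) < L - r := sub_pos.2 (Nat.cast_lt.2 hr)
  have hslope_lt {r : ℕ} (h₀ : r₀ ≤ r) (hr : r < L) :
      boundarySlope a b C r < boundarySlope a b C L :=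
    sub_pos.1 ((mul_pos (hgap hr) hstep).trans_le (hslope h₀ hr.le))
  have htilt (r : ℕ) (h₀ : r₀ ≤ r) (hr : r < L) : boundaryTilt a b C r ≤ (1 + C) ^ (m + 1) := by
    simpa only [boundaryTilt, hmass, div_one, hb] using
      boundaryTilt_monotoneOn hr₀ ha hC.le hdrift hsmall ⟨h₀, hr.le⟩ ⟨hr₀L.le, le_rfl⟩ hr.le
  calc survivalWeight a b L m ≤ 1 - (1 + C)⁻¹ +
        ((1 + C) ^ 2 * (boundarySlope a b C L - boundarySlope a b C r₀))⁻¹ :=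
        survivalWeight_le_of_boundary_le hr₀ hr₀L.le ha hmass hC.le htilt
          (fun r h₀ hr => (hslope_lt h₀ hr).le) (hslope_lt le_rfl hr₀L) hb
    _ ≤ C + ((1 + C) ^ 2 * ((L - r₀) * ((C - E) / (1 + C) ^ 2)))⁻¹ := by
      have hC_le : 1 - (1 + C)⁻¹ ≤ C :=
        calc 1 - (1 + C)⁻¹ = C / (1 + C) := by
              field_simp
              ring
          _ ≤ C := div_le_self hC.le (by linarith)
      gcongr
      · exact mul_pos (by positivity) (mul_pos (hgap hr₀L) hstep)
      · exact hslope le_rfl hr₀L.le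
    _ = C + 1 / ((L - r₀) * (C - E)) := by
      field_simp

end Boundary

/-- Quantitative form, at a fixed `n`, of the hypotheses `ε → 0`, `L ε² → ∞`,
`m = L (1 + ε + o(ε))` and `p_i = 1 / L + o(ε / L)`, with a common relative error `η`. The numerical
constants have no significance. -/
structure NearCritical (a : ℕ → ℝ) (L m : ℕ) (ε η : ℝ) : Prop where
  pos : 0 < ε
  small : 15 * ε ≤ η
  error_le : η ≤ 1 / 4
  large : 10 ≤ η * (L * ε ^ 2)
  balls : |(m : ℝ) - L * (1 + ε)| ≤ η / 5 * (L * ε)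
  weights : ∀ i < L, |a i - (L : ℝ)⁻¹| ≤ η / 5 * ε / L
  total : mass a L = 1

namespace NearCritical

variable {a : ℕ → ℝ} {L m b : ℕ} {ε η : ℝ}

lemma reverse (h : NearCritical a L m ε η) :
    NearCritical (fun i => a (L - 1 - i)) L m ε η where
  __ := h
  weights i hi := h.weights _ (by omega)
  total := (sum_range_reflect a L).trans h.total

lemma error_pos (h : NearCritical a L m ε η) : 0 < η := by linarith [h.pos, h.small]

lemma bins_pos (h : NearCritical a L m ε η) : (0 : ℝ) < L := by
  have := h.error_pos
  by_contra! hL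
  have : (L : ℝ) = 0 := le_antisymm hL (Nat.cast_nonneg L)
  linarith [h.large, show η * (L * ε ^ 2) = 0 by rw [this]; ring]

lemma inv_bins_le (h : NearCritical a L m ε η) : (L : ℝ)⁻¹ ≤ η / 10 * ε ^ 2 := by
  rw [inv_le_iff_one_le_mul₀ h.bins_pos]
  linarith [h.large]

lemma inv_bins_le_error (h : NearCritical a L m ε η) : (L : ℝ)⁻¹ ≤ η / 10 * ε := by
  have hε := h.pos
  have hη := h.error_pos
  have hε_le : ε ≤ 1 := by linarith [h.small, h.error_le]
  calc (L : ℝ)⁻¹ ≤ η / 10 * (ε * ε) := by linarith [h.inv_bins_le]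
    _ ≤ η / 10 * (1 * ε) := by gcongr
    _ = η / 10 * ε := by ring

lemma abs_surplus_div_sub_le (h : NearCritical a L m ε η) (hb : m + 1 = L + b) :
    |b / L - ε| ≤ 2 / 5 * η * ε := by
  have hL := h.bins_pos
  have hinv := h.inv_bins_le_error
  have hb' : (b : ℝ) = m + 1 - L := by
    rw [eq_sub_iff_add_eq']
    exact_mod_cast hb.symm
  have hsplit : b / L - ε = (m - L * (1 + ε)) / L + (L : ℝ)⁻¹ := by
    rw [hb']
    field_simp
    ring
  calc |b / L - ε| ≤ |(m - L * (1 + ε)) / L| + |(L : ℝ)⁻¹| := hsplit ▸ abs_add_le _ _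
    _ ≤ η / 5 * ε + η / 5 * ε := by
      gcongr
      · rw [abs_div, abs_of_pos hL, div_le_iff₀ hL]
        linarith [h.balls]
      · rw [abs_of_pos (by positivity)]
        linarith [mul_pos h.error_pos h.pos]
    _ = 2 / 5 * η * ε := by ring

lemma abs_weight_mul_sub_mass_le (h : NearCritical a L m ε η) {r : ℕ} (hr : r < L) :
    |r * a r - mass a r| ≤ 2 / 5 * η * ε := by
  have hL := h.bins_pos
  have hε := h.pos
  have hη := h.error_pos
  have hsum : r * a r - mass a r = ∑ i ∈ range r, (a r - a i) := by
    rw [sum_sub_distrib, sum_const, card_range, nsmul_eq_mul, mass]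
  calc |r * a r - mass a r| ≤ ∑ i ∈ range r, |a r - a i| := hsum ▸ abs_sum_le_sum_abs _ _
    _ ≤ ∑ _i ∈ range r, 2 * (η / 5 * ε / L) := sum_le_sum fun i hi => by
      have hri := abs_sub_le (a r) (L : ℝ)⁻¹ (a i)
      rw [abs_sub_comm (L : ℝ)⁻¹] at hri
      linarith [h.weights r hr, h.weights i ((mem_range.1 hi).trans hr)]
    _ = 2 / 5 * η * ε * (r / L) := by
      rw [sum_const, card_range, nsmul_eq_mul]
      ring
    _ ≤ 2 / 5 * η * ε :=
      mul_le_of_le_one_right (by positivity) (div_le_one_of_le₀ (Nat.cast_le.2 hr.le) hL.le)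

lemma abs_drift_sub_le (h : NearCritical a L m ε η) (hb : m + 1 = L + b) {r : ℕ} (hr : r < L) :
    |(r + b) * a r - mass a r - ε| ≤ η * ε := by
  have hε := h.pos
  have hη := h.error_pos
  have hballs := h.abs_surplus_div_sub_le hb
  have hbL : b / L ≤ (1 : ℝ) := by
    nlinarith [(abs_le.1 hballs).2, h.small, h.error_le]
  have hlast : |b * (a r - (L : ℝ)⁻¹)| ≤ η / 5 * ε := by
    calc |b * (a r - (L : ℝ)⁻¹)| = b * |a r - (L : ℝ)⁻¹| := by rw [abs_mul, Nat.abs_cast]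
      _ ≤ b * (η / 5 * ε / L) := by
        gcongr
        exact h.weights r hr
      _ = η / 5 * ε * (b / L) := by ring
      _ ≤ η / 5 * ε := mul_le_of_le_one_right (by positivity) hbL
  calc |(r + b) * a r - mass a r - ε|
      = |(r * a r - mass a r) + (b / L - ε) + b * (a r - (L : ℝ)⁻¹)| := by
        congr 1
        ring
    _ ≤ |r * a r - mass a r| + |b / L - ε| + |b * (a r - (L : ℝ)⁻¹)| := abs_add_three _ _ _
    _ ≤ η * ε := by linarith [h.abs_weight_mul_sub_mass_le hr]

lemma le_weight (h : NearCritical a L m ε η) {r : ℕ} (hr : r < L) :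
    9 / 10 * (L : ℝ)⁻¹ ≤ a r := by
  have hL := inv_pos.2 h.bins_pos
  have := (abs_le.1 (h.weights r hr)).1
  have herr : η / 5 * ε ≤ 1 / 10 := by nlinarith [h.small, h.error_le, h.pos]
  rw [div_eq_mul_inv] at this
  nlinarith

lemma weight_le (h : NearCritical a L m ε η) {r : ℕ} (hr : r < L) :
    a r ≤ 2 * (L : ℝ)⁻¹ := by
  have hL := inv_pos.2 h.bins_pos
  have := (abs_le.1 (h.weights r hr)).2
  have herr : η / 5 * ε ≤ 1 / 10 := by nlinarith [h.small, h.error_le, h.pos]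
  rw [div_eq_mul_inv] at this
  nlinarith

lemma weight_pos (h : NearCritical a L m ε η) {r : ℕ} (hr : r < L) : 0 < a r :=
  (mul_pos (by norm_num) (inv_pos.2 h.bins_pos)).trans_le (h.le_weight hr)

lemma le_mass (h : NearCritical a L m ε η) {r : ℕ} (hr : r ≤ L) :
    9 / 10 * (r / L) ≤ mass a r :=
  calc 9 / 10 * (r / L) = ∑ _i ∈ range r, 9 / 10 * (L : ℝ)⁻¹ := by
        rw [sum_const, card_range, nsmul_eq_mul]
        ring
    _ ≤ mass a r := sum_le_sum fun i hi => h.le_weight ((mem_range.1 hi).trans_le hr)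

lemma le_mass_of_half_le (h : NearCritical a L m ε η) {r : ℕ} (hr₀ : L / 2 ≤ r) (hr : r ≤ L) :
    2 / 5 ≤ mass a r := by
  have hL : (20 : ℝ) ≤ L := by
    rw [← inv_le_inv₀ h.bins_pos (by norm_num)]
    nlinarith [h.inv_bins_le_error, h.small, h.error_le, h.pos]
  have hr_ge : 9 / 20 * (L : ℝ) ≤ r := by
    have : (L : ℝ) ≤ 2 * r + 1 := by exact_mod_cast (by omega : L ≤ 2 * r + 1)
    linarith
  calc 2 / 5 ≤ 9 / 10 * (9 / 20 * (L : ℝ) / L) := by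
        rw [mul_div_cancel_right₀ _ h.bins_pos.ne']
        norm_num
    _ ≤ 9 / 10 * (r / L) := by gcongr
    _ ≤ mass a r := h.le_mass hr

lemma le_survivalWeight (h : NearCritical a L m ε η) (hb : m + 1 = L + b) :
    2 * ε * (1 - 2 * η) ≤ survivalWeight a b L m := by
  have hε := h.pos
  have hη := h.error_pos
  have hη_le := h.error_le
  have hε_small := h.small
  set E := (1 - η) * ε with hE_def
  have hE : 0 < E := mul_pos (by linarith) hε
  have hE_le : E ≤ ε := mul_le_of_le_one_left hε.le (by linarith)
  have hEL : 16 * (L : ℝ)⁻¹ ≤ E := by nlinarith [h.inv_bins_le_error]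
  have hsmall (r : ℕ) (hr : r < L) (hr0 : 0 < r) :
      2 * (mass a r + a r) * a r ≤ E * mass a r := by
    have ha := h.weight_pos hr
    have ha_le := h.weight_le hr
    have hmass : 9 / 10 * (L : ℝ)⁻¹ ≤ mass a r :=
      calc 9 / 10 * (L : ℝ)⁻¹ = 9 / 10 * ((1 : ℕ) / L) := by rw [Nat.cast_one, one_div]
        _ ≤ 9 / 10 * (r / L) := by gcongr; exact hr0
        _ ≤ mass a r := h.le_mass hr.le
    have hmass_pos : 0 < mass a r := by linarith
    calc 2 * (mass a r + a r) * a r ≤ 2 * (4 * mass a r) * (2 * (L : ℝ)⁻¹) := by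
          gcongr
          linarith
      _ = 16 * (L : ℝ)⁻¹ * mass a r := by ring
      _ ≤ E * mass a r := by gcongr
  calc 2 * ε * (1 - 2 * η) ≤ 2 * E * (1 - 2 * E) := by
        rw [hE_def]
        nlinarith [mul_pos hε hη]
    _ ≤ 1 - (1 + 2 * E)⁻¹ := by
      rw [le_sub_comm, inv_le_iff_one_le_mul₀ (by positivity)]
      nlinarith [pow_pos hE 3]
    _ ≤ survivalWeight a b L m := le_survivalWeight_of_le_drift (fun r hr => h.weight_pos hr)
      h.total hE (fun r hr => by linarith [(abs_le.1 (h.abs_drift_sub_le hb hr)).1]) hsmall hb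

lemma survivalWeight_le (h : NearCritical a L m ε η) (hb : m + 1 = L + b) :
    survivalWeight a b L m ≤ 2 * ε * (1 + 4 * η) := by
  have hε := h.pos
  have hη := h.error_pos
  have hη_le := h.error_le
  have hL := h.bins_pos
  set E := (1 + η) * ε
  set C := 2 * (1 + η) * E
  have hE : 0 < E := by positivity
  have hEC : ε ≤ C - E := by nlinarith
  have hC_le : C ≤ 2 * ε * (1 + 9 / 4 * η) := by nlinarith [mul_pos hε hη]
  have hhalf_le : ((L / 2 : ℕ) : ℝ) ≤ L / 2 := Nat.cast_div_le
  have hsmall (r : ℕ) (hr₀ : L / 2 ≤ r) (hr : r < L) :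
      E * (2 * (mass a r + a r) + C) ≤ C * mass a r := by
    have hmass := h.le_mass_of_half_le hr₀ hr.le
    have ha : a r ≤ η / 50 := by nlinarith [h.weight_le hr, h.inv_bins_le_error, h.small]
    have hC_small : C ≤ 9 / 40 * η := by nlinarith [h.small]
    calc E * (2 * (mass a r + a r) + C) ≤ E * (2 * (1 + η) * mass a r) := by
          gcongr
          nlinarith
      _ = C * mass a r := by ring
  calc survivalWeight a b L m ≤ C + 1 / ((L - (L / 2 : ℕ)) * (C - E)) :=
        survivalWeight_le_of_drift_le
          (by linarith [h.le_mass_of_half_le le_rfl (Nat.div_le_self L 2)])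
          (Nat.div_lt_self (Nat.cast_pos.1 hL) one_lt_two) (fun r hr => (h.weight_pos hr).le)
          h.total (by positivity) (by linarith)
          (fun r _ hr => by linarith [(abs_le.1 (h.abs_drift_sub_le hb hr)).2]) hsmall hb
    _ ≤ C + 1 / (L / 2 * ε) := by
      gcongr <;> linarith
    _ = C + 2 / ε * (L : ℝ)⁻¹ := by field_simp
    _ ≤ C + 2 / ε * (η / 10 * ε ^ 2) := by
      gcongr
      exact h.inv_bins_le
    _ = C + η / 5 * ε := by
      field_simp
      ring
    _ ≤ 2 * ε * (1 + 4 * η) := by linarith [mul_pos hη hε]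

lemma abs_fixedLeftProb_div_sub_one_le {p : ℕ → ℝ} (h : NearCritical p L m ε η) :
    |fixedLeftProb L m p / (2 * ε) - 1| ≤ 4 * η := by
  have hε := h.pos
  have hη := h.error_pos
  obtain ⟨b, hb⟩ : ∃ b, m + 1 = L + b := by
    refine ⟨m + 1 - L, (Nat.add_sub_cancel' ?_).symm⟩
    have hballs := (abs_le.1 h.balls).1
    have : (0 : ℝ) ≤ (1 - η / 5) * (L * ε) :=
      mul_nonneg (by linarith [h.error_le]) (mul_nonneg h.bins_pos.le hε.le)
    exact_mod_cast (by linarith : (L : ℝ) ≤ m + 1)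
  rw [fixedLeftProb_eq_survivalWeight p hb, abs_sub_le_iff, sub_le_iff_le_add,
    sub_le_comm, div_le_iff₀ (by positivity), le_div_iff₀ (by positivity)]
  constructor
  · linarith [h.reverse.survivalWeight_le hb]
  · linarith [h.reverse.le_survivalWeight hb, mul_pos hε hη]

end NearCritical

lemma eventually_nearCritical {ε : ℕ → ℝ} {L m : ℕ → ℕ} {p : ℕ → ℕ → ℝ} (hεpos : ∀ n, 0 < ε n)
    (hε0 : Tendsto ε atTop (𝓝 0)) (hLε : Tendsto (fun n => (L n : ℝ) * ε n ^ 2) atTop atTop)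
    (hm : Tendsto (fun n => ((m n : ℝ) - L n * (1 + ε n)) / (L n * ε n)) atTop (𝓝 0))
    (hpsum : ∀ n, ∑ i ∈ range (L n), p n i = 1)
    (hpunif : ∀ δ : ℝ, 0 < δ → ∀ᶠ n in atTop, ∀ i < L n, |p n i - (L n : ℝ)⁻¹| ≤ δ * ε n / L n)
    {η : ℝ} (hη : 0 < η) (hη_le : η ≤ 1 / 4) :
    ∀ᶠ n in atTop, NearCritical (p n) (L n) (m n) (ε n) η := by
  filter_upwards [hε0.eventually_le_const (by positivity : 0 < η / 15),
    hLε.eventually_ge_atTop (10 / η), Metric.tendsto_nhds.1 hm (η / 5) (by positivity),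
    hpunif (η / 5) (by positivity)] with n hε hL hballs hweights
  have hlarge : 10 ≤ η * (L n * ε n ^ 2) := by rwa [div_le_iff₀' hη] at hL
  have hLpos : (0 : ℝ) < L n :=
    pos_of_mul_pos_left ((by positivity : 0 < 10 / η).trans_le hL) (sq_nonneg _)
  have hLε_pos : 0 < L n * ε n := mul_pos hLpos (hεpos n)
  rw [dist_zero_right, norm_eq_abs, abs_div, abs_of_pos hLε_pos, div_lt_iff₀ hLε_pos] at hballs
  exact ⟨hεpos n, by linarith, hη_le, hlarge, hballs.le, hweights, hpsum n⟩

/-- Proposition `t24`: let `ε = ε(n) → 0⁺`, `L = L(n) → ∞` with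
`L ε² → ∞`, let `m = m(n)` be integers with `m = L(1 + ε + o(ε))`, and let
`p_1, …, p_L` be probabilities summing to `1` with `p_i = 1/L + o(ε/L)` uniformly
in `i`.  Placing exactly `m` balls independently into the `L` bins according to
these probabilities, the probability `f(m)` of `ESC_L` satisfies `f(m) ∼ 2ε`. -/
theorem fixedLeft_asymp (ε : ℕ → ℝ) (L m : ℕ → ℕ) (p : ℕ → ℕ → ℝ)
    (hεpos : ∀ n, 0 < ε n) (hε0 : Tendsto ε atTop (𝓝 0))
    (hL : Tendsto L atTop atTop)
    (hLε : Tendsto (fun n : ℕ => (L n : ℝ) * ε n ^ 2) atTop atTop)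
    (hm : Tendsto (fun n : ℕ => ((m n : ℝ) - L n * (1 + ε n)) / (L n * ε n))
      atTop (𝓝 0))
    (hpnn : ∀ n, ∀ i < L n, 0 ≤ p n i)
    (hpsum : ∀ n, ∑ i ∈ Finset.range (L n), p n i = 1)
    (hpunif : ∀ δ : ℝ, 0 < δ → ∀ᶠ n in atTop, ∀ i < L n,
        |p n i - (L n : ℝ)⁻¹| ≤ δ * ε n / L n) :
    Tendsto (fun n : ℕ => fixedLeftProb (L n) (m n) (p n) / (2 * ε n))
      atTop (𝓝 1) := by
  refine Metric.tendsto_nhds.2 fun θ hθ => ?_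
  have hη : 0 < min (θ / 5) (1 / 4) := by positivity
  filter_upwards [eventually_nearCritical hεpos hε0 hLε hm hpsum hpunif hη (min_le_right _ _)]
    with n hn
  calc |fixedLeftProb (L n) (m n) (p n) / (2 * ε n) - 1| ≤ 4 * min (θ / 5) (1 / 4) :=
        hn.abs_fixedLeftProb_div_sub_one_le
    _ ≤ 4 * (θ / 5) := by gcongr; exact min_le_left _ _
    _ < θ := by linarith
end

section
/- Let M = M(n) → ∞ and s = s(n) → ∞, and let A = A(n), B = B(n) be positive integers with A ≥ s√M and B ≥ s√M and M + B - A ≥ 0. Place M + B - A balls independently and uniformly at random into bins 1,…,M, let Z_i be the number of balls in bin i, and define the walk Y_0 = A, Y_i = Y_{i-1} + Z_i - 1 for 1 ≤ i ≤ M (so Y_M = B). Let MIN = min_{0 ≤ i ≤ M} Y_i. Then Pr[MIN ≤ 0] → 0. -/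
open Filter Topology Real Finset

/-- Place `M + B - A` balls independently and uniformly at random into bins `1,…,M`.
With `Z_i` the number of balls in bin `i` and the walk `Y_0 = A`,
`Y_i = Y_{i-1} + Z_i - 1` (so `Y_t = A + #{j : ball j in first t bins} - t`),
this is the probability that `MIN = min_{0 ≤ i ≤ M} Y_i ≤ 0`. -/
noncomputable def bridgeMinProb (M A B : ℕ) : ℝ :=
  ∑ ω : Fin (M + B - A) → Fin M, ((M : ℝ))⁻¹ ^ (M + B - A) *
    ind (∃ t ≤ M,
      (A : ℝ) + ((Finset.univ.filter (fun j => ((ω j : ℕ) < t))).card : ℝ) - t ≤ 0)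

/-!
The mean load of the bins `t, …, M - 1` is a martingale in `t`: given the contents of the first `t`
bins, the remaining ones are exchangeable. Writing `K = M + B - A` for the number of balls, its
variance at time `t` is at most `K / (4 (M - t)²)`, so Doob's inequality bounds the probability of a
deviation `r` from the mean `K / M` during the first half by `K / (M r)²`. A walk that is
nonpositive at some `t ≤ M / 2` forces the deviation `A / M`; one that is nonpositive at a later
time forces, after reversing the order of the bins, the deviation `B / M`. Hence the walk becomes
nonpositive with probability at most `K / A² + K / B²`. Removing balls only lowers the walk, so one
may assume `B ≤ A`, in which case `K ≤ M` and the bound is at most `2 / s²`.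
-/

open MeasureTheory ProbabilityTheory

section Maximal

variable {Ω : Type*} {mΩ : MeasurableSpace Ω} {μ : Measure Ω}

lemma submartingale_comp_of_convexOn {ι E : Type*} [Preorder ι] [NormedAddCommGroup E]
    [NormedSpace ℝ E] [CompleteSpace E] {ℱ : Filtration ι mΩ} [SigmaFiniteFiltration μ ℱ]
    {f : ι → Ω → E} {φ : E → ℝ} (hf : Martingale f ℱ μ) (hφ : ConvexOn ℝ Set.univ φ)
    (hφc : Continuous φ) (hint : ∀ i, Integrable (φ ∘ f i) μ) :
    Submartingale (fun i ↦ φ ∘ f i) ℱ μ := by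
  refine ⟨fun i ↦ hφc.comp_stronglyMeasurable (hf.stronglyAdapted i), fun i j hij ↦ ?_, hint⟩
  filter_upwards [hφ.map_condExp_le_univ (ℱ.le i) hφc.lowerSemicontinuous (hf.integrable j)
    (hint j), hf.condExp_ae_eq hij] with ω hjensen hmart
  simpa [hmart] using hjensen

lemma mul_measureReal_exists_ge_le_integral [IsFiniteMeasure μ] {ℱ : Filtration ℕ mΩ}
    {f : ℕ → Ω → ℝ} (hf : Submartingale f ℱ μ) (hf0 : 0 ≤ f) {r : ℝ} (hr : 0 ≤ r) (n : ℕ) :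
    r * μ.real {ω | ∃ k ≤ n, r ≤ f k ω} ≤ ∫ ω, f n ω ∂μ := by
  lift r to NNReal using hr
  have hset : {ω | ∃ k ≤ n, (r : ℝ) ≤ f k ω} =
      {ω | (r : ℝ) ≤ (range (n + 1)).sup' nonempty_range_add_one fun k ↦ f k ω} := by
    ext ω
    simp [Finset.le_sup'_iff]
  have hdoob := ENNReal.toReal_mono ENNReal.ofReal_ne_top (maximal_ineq hf hf0 (ε := r) n)
  rw [ENNReal.toReal_mul, ENNReal.coe_toReal,
    ENNReal.toReal_ofReal (integral_nonneg fun ω ↦ hf0 n ω), ← hset] at hdoob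
  exact hdoob.trans (setIntegral_le_integral (hf.integrable n) (ae_of_all _ (hf0 n)))

lemma measureReal_exists_ge_le_variance_div_sq [IsFiniteMeasure μ] {ℱ : Filtration ℕ mΩ}
    {f : ℕ → Ω → ℝ} (hf : Martingale f ℱ μ) (hf2 : ∀ k, MemLp (f k) 2 μ) {r : ℝ} (hr : 0 < r)
    (n : ℕ) :
    μ.real {ω | ∃ k ≤ n, r ≤ |f k ω - μ[f n]|} ≤ Var[f n; μ] / r ^ 2 := by
  have hcentred : Martingale (fun k ω ↦ f k ω - μ[f n]) ℱ μ :=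
    hf.sub (martingale_const ℱ μ μ[f n])
  have hsq : Submartingale (fun k ω ↦ (f k ω - μ[f n]) ^ 2) ℱ μ :=
    submartingale_comp_of_convexOn hcentred (even_two.convexOn_pow) (by fun_prop)
      fun k ↦ ((hf2 k).sub (memLp_const _)).integrable_sq
  have hdoob := mul_measureReal_exists_ge_le_integral hsq (fun _ _ ↦ sq_nonneg _) (sq_nonneg r) n
  rw [← variance_eq_integral (hf2 n).aemeasurable] at hdoob
  rw [le_div_iff₀' (by positivity)]
  simpa [sq_le_sq, abs_of_pos hr] using hdoob

end Maximal

section TailAverage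

variable {Ω : Type*} {mΩ : MeasurableSpace Ω} {μ : Measure Ω} {X : ℕ → Ω → ℝ} {N : ℕ}

/-- The average of those among `X 0, …, X (N - 1)` whose index is at least `t`
(junk value `0` if `N ≤ t`). For exchangeable variables with constant sum it is a martingale in
`t < N`. -/
noncomputable def tailAverage (X : ℕ → Ω → ℝ) (N t : ℕ) (ω : Ω) : ℝ :=
  (∑ b ∈ Finset.Ico t N, X b ω) / (N - t)

lemma setIntegral_tailAverage (hint : ∀ b, Integrable (X b) μ) {t : ℕ} (ht : t < N) {c : ℝ}
    {S : Set Ω} (hS : ∀ b, t ≤ b → b < N → ∫ ω in S, X b ω ∂μ = c) :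
    ∫ ω in S, tailAverage X N t ω ∂μ = c := by
  have hpos : (0 : ℝ) < N - t := sub_pos.2 (mod_cast ht)
  simp only [tailAverage]
  rw [integral_div, integral_finsetSum _ fun b _ ↦ (hint b).integrableOn,
    sum_congr rfl fun b hb ↦ hS b (Finset.mem_Ico.1 hb).1 (Finset.mem_Ico.1 hb).2, sum_const,
    Nat.card_Ico, nsmul_eq_mul, Nat.cast_sub ht.le, mul_div_cancel_left₀ _ hpos.ne']

lemma integrable_tailAverage (hint : ∀ b, Integrable (X b) μ) (t : ℕ) :
    Integrable (tailAverage X N t) μ :=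
  (integrable_finsetSum _ fun b _ ↦ hint b).div_const _

lemma martingale_tailAverage [IsFiniteMeasure μ] {ℱ : Filtration ℕ mΩ}
    (hadp : StronglyAdapted ℱ (tailAverage X N)) (hint : ∀ b, Integrable (X b) μ)
    (hexch : ∀ t b, t ≤ b → b < N → ∀ S, MeasurableSet[ℱ t] S →
      ∫ ω in S, X b ω ∂μ = ∫ ω in S, X t ω ∂μ) {m : ℕ} (hm : m < N) :
    Martingale (fun t ↦ tailAverage X N (min t m)) ℱ μ := by
  refine martingale_of_setIntegral_eq_succ
    (fun t ↦ (hadp (min t m)).mono (ℱ.mono (min_le_left t m)))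
    (fun t ↦ integrable_tailAverage hint _) fun t S hS ↦ ?_
  rcases lt_or_ge t m with htm | hmt
  · rw [min_eq_left htm.le, min_eq_left htm,
      setIntegral_tailAverage hint (htm.trans hm) fun b htb hbN ↦ hexch t b htb hbN S hS,
      setIntegral_tailAverage hint (by omega) fun b htb hbN ↦ hexch t b (by omega) hbN S hS]
  · rw [min_eq_right hmt, min_eq_right (hmt.trans t.le_succ)]

end TailAverage

section ProductMeasure

variable {ι κ α : Type*} [Fintype ι] [Fintype κ] [MeasurableSpace α] {ν : Measure α}
  [IsProbabilityMeasure ν]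

lemma measurePreserving_comp_embedding (e : κ ↪ ι) :
    MeasurePreserving (fun (ω : ι → α) k ↦ ω (e k)) (Measure.pi fun _ ↦ ν)
      (Measure.pi fun _ ↦ ν) := by
  refine ⟨by fun_prop, ?_⟩
  have hindep : iIndepFun (fun (k : κ) (ω : ι → α) ↦ ω (e k)) (Measure.pi fun _ ↦ ν) :=
    (iIndepFun_pi (μ := fun _ : ι ↦ ν) (X := fun _ ↦ id) fun _ ↦ aemeasurable_id).precomp
      e.injective
  rw [(iIndepFun_iff_map_fun_eq_pi_map fun k ↦ (measurable_pi_apply _).aemeasurable).1 hindep]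
  congr with k : 1
  exact (measurePreserving_eval (fun _ ↦ ν) (e k)).map_eq

lemma variance_card_filter_le {p : α → Prop} [DecidablePred p] (hp : MeasurableSet {a | p a}) :
    Var[fun ω : ι → α ↦ (#{j | p (ω j)} : ℝ); Measure.pi fun _ ↦ ν] ≤ Fintype.card ι / 4 := by
  let Y : α → ℝ := fun a ↦ if p a then 1 else 0
  have hY : Measurable Y := Measurable.ite hp measurable_const measurable_const
  have hY01 : ∀ a, Y a ∈ Set.Icc (0 : ℝ) 1 := fun a ↦ by simp only [Y]; split_ifs <;> simp
  have hvar : Var[Y; ν] ≤ 1 / 4 :=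
    (variance_le_sq_of_bounded (ae_of_all _ hY01) hY.aemeasurable).trans_eq (by norm_num)
  have hsum : (fun ω : ι → α ↦ (#{j | p (ω j)} : ℝ)) = ∑ j : ι, fun ω ↦ Y (ω j) := by
    ext ω
    simp [Y, Finset.sum_apply]
  rw [hsum, variance_sum_pi fun _ ↦ memLp_of_bounded (ae_of_all _ hY01) hY.aestronglyMeasurable 2]
  calc ∑ _j : ι, Var[Y; ν] ≤ ∑ _j : ι, (1 / 4 : ℝ) := sum_le_sum fun _ _ ↦ hvar
    _ = Fintype.card ι / 4 := by simp [div_eq_mul_inv]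

end ProductMeasure

section Balls

variable {ι : Type*} [Fintype ι] {M : ℕ}

/-- The law of the placement `ω : ι → Fin M` of balls labelled by `ι`, thrown independently and
uniformly into `M` bins. -/
noncomputable def ballsLaw (ι : Type*) [Fintype ι] (M : ℕ) : Measure (ι → Fin M) :=
  Measure.pi fun _ ↦ uniformOn Set.univ

/-- The number of balls in bin `b`, which is `0` for `b ≥ M`. -/
def load (b : ℕ) (ω : ι → Fin M) : ℝ := #{j | (ω j : ℕ) = b}

/-- The information carried by the contents of the first `t` bins: at time `t` a ball is seen
exactly if it lies in a bin `< t`. -/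
def revealedBins (ι : Type*) [Finite ι] (M : ℕ) :
    Filtration ℕ (MeasurableSpace.pi : MeasurableSpace (ι → Fin M)) where
  seq t := MeasurableSpace.comap (fun (ω : ι → Fin M) j ↦ min (ω j : ℕ) t) ⊤
  mono' s t hst := by
    have hfactor : (fun (ω : ι → Fin M) j ↦ min (ω j : ℕ) s) =
        (fun v j ↦ min (v j) s) ∘ fun (ω : ι → Fin M) j ↦ min (ω j : ℕ) t := by
      ext ω j
      simp [min_assoc, min_eq_right hst]
    dsimp only
    rw [hfactor, ← MeasurableSpace.comap_comp]
    exact MeasurableSpace.comap_mono le_top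
  le' _ _ _ := .of_discrete

instance [NeZero M] : IsProbabilityMeasure (ballsLaw ι M) :=
  inferInstanceAs (IsProbabilityMeasure (Measure.pi _))

lemma measurePreserving_uniformOn_univ {α : Type*} [Finite α] [MeasurableSpace α]
    [DiscreteMeasurableSpace α] (e : Equiv.Perm α) :
    MeasurePreserving e (uniformOn Set.univ) (uniformOn Set.univ) := by
  have := Fintype.ofFinite α
  refine ⟨.of_discrete, Measure.ext fun S hS ↦ ?_⟩
  rw [Measure.map_apply .of_discrete hS, uniformOn_univ, uniformOn_univ,
    Measure.count_apply .of_discrete, Measure.count_apply hS,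
    Set.encard_preimage_of_bijective e.bijective]

lemma measurePreserving_relabel (e : Equiv.Perm (Fin M)) :
    MeasurePreserving (fun (ω : ι → Fin M) j ↦ e (ω j)) (ballsLaw ι M) (ballsLaw ι M) :=
  measurePreserving_pi _ _ fun _ ↦ measurePreserving_uniformOn_univ e

lemma sum_load_Ico (t : ℕ) (ω : ι → Fin M) :
    ∑ b ∈ Finset.Ico t M, load b ω = #{j | t ≤ (ω j : ℕ)} := by
  simp only [load]
  rw [← Nat.cast_sum, card_eq_sum_card_fiberwise (f := fun j ↦ (ω j : ℕ)) (t := Finset.Ico t M)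
    (by intro j; simp)]
  congr 1
  refine sum_congr rfl fun b hb ↦ ?_
  rw [filter_filter]
  congr with j
  simp only [Finset.mem_Ico] at hb
  grind

lemma tailAverage_load (t : ℕ) (ω : ι → Fin M) :
    tailAverage load M t ω = #{j | t ≤ (ω j : ℕ)} / ((M : ℝ) - t) := by
  rw [tailAverage, sum_load_Ico]

lemma tailAverage_load_zero (ω : ι → Fin M) :
    tailAverage load M 0 ω = Fintype.card ι / M := by
  simp [tailAverage_load]

lemma stronglyAdapted_tailAverage_load :
    StronglyAdapted (revealedBins ι M) (tailAverage load M) := fun t ↦ by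
  have hfactor : tailAverage load M t =
      (fun v : ι → ℕ ↦ (#{j | t ≤ v j} : ℝ) / ((M : ℝ) - t)) ∘
        fun (ω : ι → Fin M) j ↦ min (ω j : ℕ) t := by
    ext ω
    simp [tailAverage_load]
  rw [hfactor]
  exact (measurable_from_top.comp (comap_measurable _)).stronglyMeasurable

lemma setIntegral_load_eq {t b : ℕ} (htb : t ≤ b) (hb : b < M)
    {S : Set (ι → Fin M)} (hS : MeasurableSet[revealedBins ι M t] S) :
    ∫ ω in S, load b ω ∂ballsLaw ι M = ∫ ω in S, load t ω ∂ballsLaw ι M := by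
  -- Swapping the unrevealed bins `t` and `b` preserves both the law and `S`.
  let i : Fin M := ⟨t, htb.trans_lt hb⟩
  let k : Fin M := ⟨b, hb⟩
  let e : Equiv.Perm (Fin M) := Equiv.swap i k
  have hmin : ∀ a, min (e a : ℕ) t = min (a : ℕ) t := fun a ↦ by
    simp only [e, i, k, Equiv.swap_apply_def]
    split_ifs <;> grind
  have hSe : (fun (ω : ι → Fin M) j ↦ e (ω j)) ⁻¹' S = S := by
    obtain ⟨T, -, rfl⟩ := hS
    ext ω
    simp [hmin]
  have hload : ∀ ω : ι → Fin M, load b (fun j ↦ e (ω j)) = load t ω := fun ω ↦ by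
    have hiff : ∀ a : Fin M, (e a : ℕ) = b ↔ (a : ℕ) = t := fun a ↦ by
      simpa [Fin.ext_iff, e, i, k] using Equiv.swap_apply_eq_iff (x := i) (y := k) (z := a) (w := k)
    simp [load, hiff]
  have hpres := (measurePreserving_relabel e).setIntegral_preimage_emb
    (MeasurableEquiv.arrowCongr' (Equiv.refl ι) ⟨e, .of_discrete, .of_discrete⟩).measurableEmbedding
    (load b) S
  simpa only [hSe, hload] using hpres.symm

lemma variance_tailAverage_load_le [NeZero M] (t : ℕ) :
    Var[tailAverage load M t; ballsLaw ι M] ≤ Fintype.card ι / (4 * ((M : ℝ) - t) ^ 2) := by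
  have hvar : Var[fun ω : ι → Fin M ↦ (#{j | t ≤ (ω j : ℕ)} : ℝ); ballsLaw ι M] ≤
      Fintype.card ι / 4 :=
    variance_card_filter_le (ν := uniformOn Set.univ) (p := fun a : Fin M ↦ t ≤ a) .of_discrete
  simp_rw [funext (tailAverage_load t), div_eq_mul_inv _ ((M : ℝ) - t), variance_mul_const]
  calc _ ≤ Fintype.card ι / 4 * ((M : ℝ) - t)⁻¹ ^ 2 := by gcongr
    _ = _ := by rw [inv_pow, ← div_eq_mul_inv, div_div]

/-- The placements for which the tail average of the loads deviates from the mean load by at least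
`r` at some time in the first half. -/
def tailDeviates (ι : Type*) [Fintype ι] (M : ℕ) (r : ℝ) : Set (ι → Fin M) :=
  {ω | ∃ t ≤ M / 2, r ≤ |tailAverage load M t ω - Fintype.card ι / M|}

lemma measureReal_tailDeviates_le [NeZero M] {r : ℝ} (hr : 0 < r) :
    (ballsLaw ι M).real (tailDeviates ι M r) ≤ Fintype.card ι / (M * r) ^ 2 := by
  have hMpos : (0 : ℝ) < M := mod_cast NeZero.pos M
  have hmart := martingale_tailAverage (μ := ballsLaw ι M) stronglyAdapted_tailAverage_load
    (fun _ ↦ .of_finite) (fun t b htb hb S hS ↦ setIntegral_load_eq htb hb hS)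
    (Nat.div_lt_self (NeZero.pos M) one_lt_two)
  have hmean : ∫ ω, tailAverage load M (M / 2) ω ∂ballsLaw ι M = Fintype.card ι / M := by
    simpa [tailAverage_load_zero] using
      (hmart.setIntegral_eq (Nat.zero_le (M / 2)) MeasurableSet.univ).symm
  have hmax := measureReal_exists_ge_le_variance_div_sq hmart (fun _ ↦ .of_discrete) hr (M / 2)
  simp only [min_self, hmean] at hmax
  have hhalf : (M : ℝ) / 2 ≤ M - (M / 2 : ℕ) := by
    linarith [Nat.cast_div_le (α := ℝ) (m := M) (n := 2)]
  calc (ballsLaw ι M).real (tailDeviates ι M r)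
      ≤ (ballsLaw ι M).real {ω | ∃ t ≤ M / 2,
          r ≤ |tailAverage load M (min t (M / 2)) ω - Fintype.card ι / M|} := by
        refine measureReal_mono fun ω ⟨t, ht, hdev⟩ ↦ ⟨t, ht, ?_⟩
        rwa [min_eq_left ht]
    _ ≤ Var[tailAverage load M (M / 2); ballsLaw ι M] / r ^ 2 := hmax
    _ ≤ Fintype.card ι / (4 * ((M : ℝ) - (M / 2 : ℕ)) ^ 2) / r ^ 2 := by
        gcongr
        exact variance_tailAverage_load_le _
    _ ≤ Fintype.card ι / (4 * ((M : ℝ) / 2) ^ 2) / r ^ 2 := by gcongr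
    _ = Fintype.card ι / (M * r) ^ 2 := by ring

end Balls

section Walk

variable {ι κ : Type*} [Fintype ι] [Fintype κ] {M : ℕ}

/-- The placements for which the walk `Y_t = A + #{balls in the first t bins} - t` is nonpositive at
some time `t ≤ M`. -/
def walkMeetsZero (ι : Type*) [Fintype ι] (M : ℕ) (A : ℝ) : Set (ι → Fin M) :=
  {ω | ∃ t ≤ M, A + #{j | (ω j : ℕ) < t} - t ≤ 0}

lemma tailAverage_load_eq_sub (t : ℕ) (ω : ι → Fin M) :
    tailAverage load M t ω = (Fintype.card ι - #{j | (ω j : ℕ) < t}) / ((M : ℝ) - t) := by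
  have hcard := card_filter_add_card_filter_not (s := (univ : Finset ι)) (fun j ↦ (ω j : ℕ) < t)
  simp only [not_lt, card_univ] at hcard
  rw [tailAverage_load, ← hcard]
  push_cast
  ring

lemma tailAverage_load_rev {t : ℕ} (ht : t ≤ M) (ω : ι → Fin M) :
    tailAverage load M (M - t) (fun j ↦ Fin.rev (ω j)) = #{j | (ω j : ℕ) < t} / (t : ℝ) := by
  have hrev : ∀ a : Fin M, M - t ≤ (Fin.rev a : ℕ) ↔ (a : ℕ) < t := fun a ↦ by
    rw [Fin.val_rev]
    omega
  simp only [tailAverage_load, hrev, Nat.cast_sub ht, sub_sub_cancel]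

lemma mem_tailDeviates_or_rev_mem {A B : ℝ} (hA : 0 < A) (hB : 0 < B)
    (hK : (Fintype.card ι : ℝ) = M + B - A) {ω : ι → Fin M} (hω : ω ∈ walkMeetsZero ι M A) :
    ω ∈ tailDeviates ι M (A / M) ∨ (fun j ↦ Fin.rev (ω j)) ∈ tailDeviates ι M (B / M) := by
  obtain ⟨t, htM, hwalk⟩ := hω
  have htM' : (t : ℝ) ≤ M := mod_cast htM
  have ht : (0 : ℝ) < t := by
    have : (0 : ℝ) ≤ #{j | (ω j : ℕ) < t} := Nat.cast_nonneg _
    linarith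
  have hM : (0 : ℝ) < M := ht.trans_le htM'
  have hMpos : 0 < M := mod_cast hM
  have hmean : (Fintype.card ι : ℝ) / M = 1 + B / M - A / M := by
    rw [hK]
    field_simp
  rcases le_or_gt t (M / 2) with hfirst | hsecond
  · refine Or.inl ⟨t, hfirst, le_trans ?_ (le_abs_self _)⟩
    have hpos : (0 : ℝ) < M - t := sub_pos.2 (mod_cast (by omega : t < M))
    have htail : 1 + B / M ≤ tailAverage load M t ω := calc
      1 + B / M ≤ 1 + B / (M - t) := by
        gcongr
        linarith
      _ = (M - t + B) / (M - t) := by field_simp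
      _ ≤ tailAverage load M t ω := by
        rw [tailAverage_load_eq_sub]
        gcongr
        linarith
    linarith
  · refine Or.inr ⟨M - t, by omega, le_trans ?_ (neg_le_abs _)⟩
    have htail : tailAverage load M (M - t) (fun j ↦ Fin.rev (ω j)) ≤ 1 - A / M := calc
      _ = #{j | (ω j : ℕ) < t} / (t : ℝ) := tailAverage_load_rev htM ω
      _ ≤ (t - A) / t := by
        gcongr
        linarith
      _ = 1 - A / t := by field_simp
      _ ≤ 1 - A / M := by gcongr
    linarith

lemma measureReal_walkMeetsZero_le [NeZero M] {A B : ℝ} (hA : 0 < A) (hB : 0 < B)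
    (hK : (Fintype.card ι : ℝ) = M + B - A) :
    (ballsLaw ι M).real (walkMeetsZero ι M A) ≤
      Fintype.card ι / A ^ 2 + Fintype.card ι / B ^ 2 := by
  have hM : (0 : ℝ) < M := mod_cast NeZero.pos M
  have hrev : (ballsLaw ι M).real ((fun ω j ↦ Fin.rev (ω j)) ⁻¹' tailDeviates ι M (B / M)) =
      (ballsLaw ι M).real (tailDeviates ι M (B / M)) :=
    (measurePreserving_relabel Fin.revPerm).measureReal_preimage
      (MeasurableSet.of_discrete).nullMeasurableSet
  calc (ballsLaw ι M).real (walkMeetsZero ι M A)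
      ≤ (ballsLaw ι M).real (tailDeviates ι M (A / M) ∪
          (fun ω j ↦ Fin.rev (ω j)) ⁻¹' tailDeviates ι M (B / M)) :=
        measureReal_mono fun _ hω ↦ mem_tailDeviates_or_rev_mem hA hB hK hω
    _ ≤ (ballsLaw ι M).real (tailDeviates ι M (A / M)) +
          (ballsLaw ι M).real (tailDeviates ι M (B / M)) := by
        rw [← hrev]
        exact measureReal_union_le _ _
    _ ≤ Fintype.card ι / (M * (A / M)) ^ 2 + Fintype.card ι / (M * (B / M)) ^ 2 :=
        add_le_add (measureReal_tailDeviates_le (by positivity))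
          (measureReal_tailDeviates_le (by positivity))
    _ = Fintype.card ι / A ^ 2 + Fintype.card ι / B ^ 2 := by
        rw [mul_div_cancel₀ A hM.ne', mul_div_cancel₀ B hM.ne']

lemma measureReal_walkMeetsZero_le_of_embedding [NeZero M] (e : κ ↪ ι) (A : ℝ) :
    (ballsLaw ι M).real (walkMeetsZero ι M A) ≤ (ballsLaw κ M).real (walkMeetsZero κ M A) := by
  have hpres : MeasurePreserving (fun (ω : ι → Fin M) k ↦ ω (e k)) (ballsLaw ι M) (ballsLaw κ M) :=
    measurePreserving_comp_embedding e
  rw [← hpres.measureReal_preimage (MeasurableSet.of_discrete).nullMeasurableSet]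
  refine measureReal_mono fun ω ⟨t, htM, hwalk⟩ ↦ ⟨t, htM, ?_⟩
  have hcard : #{k | (ω (e k) : ℕ) < t} ≤ #{j | (ω j : ℕ) < t} :=
    card_le_card_of_injOn e (fun k ↦ by simp) e.injective.injOn
  have : (#{k | (ω (e k) : ℕ) < t} : ℝ) ≤ #{j | (ω j : ℕ) < t} := mod_cast hcard
  linarith

end Walk

section Bridge

variable {M A B : ℕ} {s : ℝ}

lemma bridgeMinProb_nonneg : 0 ≤ bridgeMinProb M A B := by
  refine sum_nonneg fun ω _ ↦ mul_nonneg (by positivity) ?_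
  unfold ind
  split_ifs <;> norm_num

lemma bridgeMinProb_eq_measureReal [NeZero M] :
    bridgeMinProb M A B =
      (ballsLaw (Fin (M + B - A)) M).real (walkMeetsZero (Fin (M + B - A)) M A) := by
  classical
  have hsingleton : ∀ ω : Fin (M + B - A) → Fin M,
      (ballsLaw (Fin (M + B - A)) M).real {ω} = (M : ℝ)⁻¹ ^ (M + B - A) := fun ω ↦ by
    simp [ballsLaw, measureReal_def, uniformOn_univ]
  have hset : walkMeetsZero (Fin (M + B - A)) M A =
      ((univ.filter (· ∈ walkMeetsZero (Fin (M + B - A)) M A) : Finset _) : Set _) := by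
    simp
  rw [hset, ← sum_measureReal_singleton, sum_filter]
  refine sum_congr rfl fun ω _ ↦ ?_
  rw [hsingleton, ind, mul_ite, mul_one, mul_zero]
  rfl

lemma bridgeMinProb_antitone_right [NeZero M] : Antitone (bridgeMinProb M A) := fun B B' hBB' ↦ by
  rw [bridgeMinProb_eq_measureReal, bridgeMinProb_eq_measureReal]
  exact measureReal_walkMeetsZero_le_of_embedding (Fin.castLEEmb (by omega)) A

lemma bridgeMinProb_le [NeZero M] (hs : 0 < s) (hA : s * √M ≤ A) (hB : s * √M ≤ B)
    (hAB : A ≤ M + B) : bridgeMinProb M A B ≤ 2 / s ^ 2 := by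
  have hMpos : (0 : ℝ) < M := mod_cast NeZero.pos M
  set C := min A B with hC
  have hAC : A ≤ M + C := by omega
  have hsC : s * √M ≤ C := by
    rw [hC, Nat.cast_min]
    exact le_min hA hB
  have hratio : ∀ x : ℝ, s * √M ≤ x → ((M + C - A : ℕ) : ℝ) / x ^ 2 ≤ 1 / s ^ 2 := fun x hx ↦ calc
    ((M + C - A : ℕ) : ℝ) / x ^ 2 ≤ M / (s * √M) ^ 2 := by
      gcongr
      omega
    _ = 1 / s ^ 2 := by
      rw [mul_pow, Real.sq_sqrt hMpos.le]
      field_simp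
  have hwalk := measureReal_walkMeetsZero_le (ι := Fin (M + C - A)) (M := M) (A := A) (B := C)
    (hA.trans_lt' (by positivity)) (hsC.trans_lt' (by positivity)) (by simp [Nat.cast_sub hAC])
  rw [Fintype.card_fin, ← bridgeMinProb_eq_measureReal] at hwalk
  calc bridgeMinProb M A B ≤ bridgeMinProb M A C := bridgeMinProb_antitone_right (min_le_right A B)
    _ ≤ 1 / s ^ 2 + 1 / s ^ 2 := hwalk.trans (add_le_add (hratio A hA) (hratio C hsC))
    _ = 2 / s ^ 2 := by ring

end Bridge

theorem bridge_min_general {α : Type*} {l : Filter α} (M A B : α → ℕ) (s : α → ℝ)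
    (hM : ∀ᶠ n in l, 0 < M n) (hs : Tendsto s l atTop)
    (hA : ∀ n, s n * √(M n) ≤ A n) (hB : ∀ n, s n * √(M n) ≤ B n)
    (hAB : ∀ n, A n ≤ M n + B n) :
    Tendsto (fun n ↦ bridgeMinProb (M n) (A n) (B n)) l (𝓝 0) := by
  have hbound : Tendsto (fun n ↦ 2 / s n ^ 2) l (𝓝 0) :=
    ((tendsto_pow_atTop two_ne_zero).comp hs).const_div_atTop 2
  refine squeeze_zero' (.of_forall fun n ↦ bridgeMinProb_nonneg) ?_ hbound
  filter_upwards [hM, hs.eventually_gt_atTop 0] with n hMn hsn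
  have : NeZero (M n) := ⟨hMn.ne'⟩
  exact bridgeMinProb_le hsn (hA n) (hB n) (hAB n)

/-- Corollary `middlecor`: let `M = M(n) → ∞`, `s = s(n) → ∞`,
and let `A = A(n)`, `B = B(n)` be positive integers with `A, B ≥ s√M` and
`M + B - A ≥ 0`.  Then the probability that the walk from `A` to `B` over the `M`
middle bins ever drops to `0` or below tends to `0`. -/
theorem bridge_min (M A B : ℕ → ℕ) (s : ℕ → ℝ)
    (hM : Tendsto M atTop atTop) (hs : Tendsto s atTop atTop)
    (hApos : ∀ n, 0 < A n) (hBpos : ∀ n, 0 < B n)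
    (hA : ∀ n, s n * Real.sqrt (M n) ≤ (A n : ℝ))
    (hB : ∀ n, s n * Real.sqrt (M n) ≤ (B n : ℝ))
    (hAB : ∀ n, A n ≤ M n + B n) :
    Tendsto (fun n : ℕ => bridgeMinProb (M n) (A n) (B n)) atTop (𝓝 0) := by
  exact bridge_min_general M A B s (hM.eventually_gt_atTop 0) hs hA hB hAB
end
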